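/- arXiv:2210.07773 — 9 statements merged into one kernel-verified Lean document; each statement's English description precedes it below -/
import Mathlib

section
/- Let n ≥ k ≥ 2 be integers and let λ ∈ (0,1] satisfy λ ≥ k²/n. Let s be a λ-dispersed preference model on n items. Then for every memory vector v ∈ Δ(n), the uniform vector x_U = (1/n, …, 1/n) lies in IRD(v); in particular, x_U ∈ EIRD. -/
open Finset

/-- The choice distribution induced by preference model `s` at memory vector `v`
when menu `K` is shown: item `i ∈ K` is chosen with probability proportional to its score. -/
noncomputable def menuDist {n : ℕ} (s : (Fin n → ℝ) → Fin n → ℝ)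
    (v : Fin n → ℝ) (K : Finset (Fin n)) : Fin n → ℝ :=
  fun i => if i ∈ K then s v i / ∑ j ∈ K, s v j else 0

/-- The set of instantaneously realizable distributions at memory vector `v`:
the convex hull of the induced distributions of all menus of size `k`. -/
noncomputable def IRD {n : ℕ} (k : ℕ) (s : (Fin n → ℝ) → Fin n → ℝ)
    (v : Fin n → ℝ) : Set (Fin n → ℝ) :=
  convexHull ℝ { p | ∃ K : Finset (Fin n), K.card = k ∧ p = menuDist s v K }

/-- Every real family on a finite type has `k` largest entries, separated from the others by a
threshold. -/
lemma exists_card_eq_threshold {ι : Type*} [Fintype ι] [DecidableEq ι] {k : ℕ} (hk : 0 < k)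
    (hkn : k ≤ Fintype.card ι) (d : ι → ℝ) :
    ∃ K : Finset ι, K.card = k ∧ ∃ t : ℝ, (∀ i ∈ K, t ≤ d i) ∧ ∀ i ∉ K, d i ≤ t := by
  have hne : (powersetCard k (univ : Finset ι)).Nonempty :=
    powersetCard_nonempty.2 (by simpa using hkn)
  obtain ⟨K, hK, hmax⟩ := exists_max_image _ (fun K => ∑ i ∈ K, d i) hne
  have hKc : K.card = k := (mem_powersetCard.1 hK).2
  obtain ⟨a, ha, hmin⟩ := exists_min_image K d (card_pos.1 (by omega))
  refine ⟨K, hKc, d a, hmin, fun j hj => ?_⟩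
  have hj' : j ∉ K.erase a := fun h => hj (mem_of_mem_erase h)
  have hswap := hmax (insert j (K.erase a)) (mem_powersetCard.2 ⟨subset_univ _, by
    rw [card_insert_of_notMem hj', card_erase_of_mem ha]; omega⟩)
  have hsum := add_sum_erase K d ha
  simp only [sum_insert hj'] at hswap
  linarith

/-- If no weight `y i` exceeds a `1/k` share of the total weight, then a weighted sum of `d` is at
most the corresponding multiple of the sum of `d` over some `k`-element set. -/
lemma exists_card_eq_sum_mul_le {ι : Type*} [Fintype ι] {k : ℕ} (hk : 0 < k)
    (hkn : k ≤ Fintype.card ι) (d y : ι → ℝ) (hy : ∀ i, 0 ≤ y i)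
    (hyk : ∀ i, y i ≤ (∑ j, y j) / k) :
    ∃ K : Finset ι, K.card = k ∧ ∑ i, y i * d i ≤ (∑ j, y j) / k * ∑ i ∈ K, d i := by
  classical
  obtain ⟨K, hKc, t, hin, hout⟩ := exists_card_eq_threshold hk hkn d
  refine ⟨K, hKc, ?_⟩
  set Y := ∑ j, y j with hY
  have hle : ∑ i, y i * (d i - t) ≤ ∑ i ∈ K, Y / k * (d i - t) := by
    rw [← sum_add_sum_compl K]
    have hK : ∑ i ∈ K, y i * (d i - t) ≤ ∑ i ∈ K, Y / k * (d i - t) :=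
      sum_le_sum fun i hi => mul_le_mul_of_nonneg_right (hyk i) (sub_nonneg.2 (hin i hi))
    have hKc : ∑ i ∈ Kᶜ, y i * (d i - t) ≤ 0 :=
      sum_nonpos fun i hi => mul_nonpos_of_nonneg_of_nonpos (hy i)
        (sub_nonpos.2 (hout i (mem_compl.1 hi)))
    linarith
  have hk0 : (k : ℝ) ≠ 0 := by positivity
  have hcancel : Y / k * (k * t) = Y * t := by field_simp
  simp only [mul_sub, sum_sub_distrib, ← sum_mul, ← mul_sum, sum_const, hKc, nsmul_eq_mul,
    ← hY] at hle
  linarith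

/-- For a `λ`-dispersed preference model with `λ ≥ k²/n`, the uniform vector lies in
`IRD(v)` for every memory vector `v`; in particular it lies in `EIRD`. -/
theorem uniform_mem_IRD {n k : ℕ} (hk : 2 ≤ k) (hkn : k ≤ n)
    (lam : ℝ) (hlam0 : 0 < lam) (hlam1 : lam ≤ 1)
    (hlamn : (k : ℝ) ^ 2 / n ≤ lam)
    (s : (Fin n → ℝ) → Fin n → ℝ)
    (hdisp : ∀ v ∈ stdSimplex ℝ (Fin n), ∀ i, lam ≤ s v i ∧ s v i ≤ 1) :
    ∀ v ∈ stdSimplex ℝ (Fin n),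
      (fun _ : Fin n => (1 : ℝ) / n) ∈ IRD k s v := by
  intro v hv
  have hlow i : lam ≤ s v i := (hdisp v hv i).1
  have hupp i : s v i ≤ 1 := (hdisp v hv i).2
  have hpos i : 0 < s v i := hlam0.trans_le (hlow i)
  have hk0 : (0 : ℝ) < k := by exact_mod_cast (by omega : 0 < k)
  have hk1 : (1 : ℝ) ≤ k := by exact_mod_cast (by omega : 1 ≤ k)
  have hn0 : (0 : ℝ) < n := by exact_mod_cast (by omega : 0 < n)
  have hfin : { p | ∃ K : Finset (Fin n), K.card = k ∧ p = menuDist s v K }.Finite :=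
    (Set.finite_range (menuDist s v)).subset (by rintro _ ⟨K, -, rfl⟩; exact ⟨K, rfl⟩)
  by_contra hnot
  obtain ⟨f, u, hlt, hgt⟩ :=
    geometric_hahn_banach_closed_point (convex_convexHull ℝ _)
      (hfin.isClosed_convexHull ℝ) hnot
  set c : Fin n → ℝ := fun i => f (Pi.single i 1) with hc
  have hf (x : Fin n → ℝ) : f x = ∑ i, x i * c i := by
    conv_lhs => rw [pi_eq_sum_univ' x]
    simp [hc, map_sum, Pi.single]
  set m : ℝ := (∑ i, c i) / n with hm
  have hfm : f (fun _ => (1 : ℝ) / n) = m := by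
    rw [hf, ← mul_sum, hm]; ring
  have hy i : (s v i)⁻¹ ≤ (∑ j, (s v j)⁻¹) / k := by
    have hsum : (n : ℝ) ≤ ∑ j, (s v j)⁻¹ := by
      simpa using card_nsmul_le_sum univ (fun j => (s v j)⁻¹) 1
        fun j _ => (one_le_inv₀ (hpos j)).2 (hupp j)
    have hkl : k ≤ n * lam := by
      rw [div_le_iff₀ hn0] at hlamn
      nlinarith
    calc (s v i)⁻¹ ≤ lam⁻¹ := inv_anti₀ hlam0 (hlow i)
      _ ≤ n / k := by rw [inv_eq_one_div, div_le_div_iff₀ hlam0 hk0]; linarith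
      _ ≤ _ := by gcongr
  obtain ⟨K, hKc, hK⟩ := exists_card_eq_sum_mul_le (by omega) (by simpa using hkn)
    (fun i => s v i * (c i - m)) (fun i => (s v i)⁻¹) (fun i => (inv_pos.2 (hpos i)).le) hy
  have hzero : ∑ i, (s v i)⁻¹ * (s v i * (c i - m)) = 0 := by
    have hsimp i : (s v i)⁻¹ * (s v i * (c i - m)) = c i - m :=
      inv_mul_cancel_left₀ (hpos i).ne' _
    rw [sum_congr rfl fun i _ => hsimp i, sum_sub_distrib, sum_const, card_univ,
      Fintype.card_fin, nsmul_eq_mul, hm, mul_div_cancel₀ _ hn0.ne', sub_self]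
  have hSpos : 0 < ∑ j ∈ K, s v j :=
    sum_pos (fun j _ => hpos j) (card_pos.1 (by omega))
  have hneg : ∑ i ∈ K, s v i * (c i - m) < 0 := by
    have hKlt : f (menuDist s v K) < m :=
      (hlt _ (subset_convexHull ℝ _ ⟨K, hKc, rfl⟩)).trans (hfm ▸ hgt)
    have hfK : f (menuDist s v K) = (∑ i ∈ K, s v i * c i) / ∑ j ∈ K, s v j := by
      simp only [hf, menuDist, ite_mul, zero_mul, sum_ite_mem, univ_inter, sum_div]
      exact sum_congr rfl fun i _ => by ring
    rw [hfK, div_lt_iff₀ hSpos] at hKlt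
    simp only [mul_sub, sum_sub_distrib, ← sum_mul]
    linarith
  have hYpos : 0 < (∑ j, (s v j)⁻¹) / k :=
    (inv_pos.2 (hpos ⟨0, by omega⟩)).trans_le (hy _)
  rw [hzero] at hK
  exact absurd hK (not_le.2 (mul_neg_of_pos_of_neg hYpos hneg))
end

section
/- Let n ≥ k ≥ 2 be integers and let λ ∈ (0,1] satisfy λ ≥ k²/n. Let s be a λ-dispersed preference model on n items. Then every x ∈ Δ(n) with ‖x − x_U‖_∞ ≤ (k−1)/(n(n−1)) lies in IRD(v) for every v ∈ Δ(n); that is, the ℓ∞-ball of radius (k−1)/(n(n−1)) around the uniform vector, intersected with Δ(n), is contained in EIRD. -/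
open Finset

/-- If every `k`-subset has nonpositive `d`-sum, then so does every nonnegative weighting none of
whose entries exceeds a `1/k` fraction of the total. -/
lemma sum_mul_nonpos_of_forall_card_eq {ι : Type*} [Fintype ι] [DecidableEq ι] {k : ℕ}
    (hk : 0 < k) (hkn : k ≤ Fintype.card ι) (d y : ι → ℝ) (hy : ∀ i, 0 ≤ y i)
    (hle : ∀ i, (k : ℝ) * y i ≤ ∑ j, y j)
    (hd : ∀ K : Finset ι, K.card = k → ∑ i ∈ K, d i ≤ 0) :
    ∑ i, d i * y i ≤ 0 := by
  have hne : (powersetCard k (univ : Finset ι)).Nonempty := powersetCard_nonempty.2 (by simpa)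
  obtain ⟨K, hKmem, hKmax⟩ := exists_max_image _ (fun K => ∑ i ∈ K, d i) hne
  have hKcard : K.card = k := (mem_powersetCard.1 hKmem).2
  obtain ⟨m, hmK, hmin⟩ := exists_min_image K d (card_pos.1 (hKcard ▸ hk))
  have hout : ∀ j ∉ K, d j ≤ d m := by
    intro j hj
    have hj' : j ∉ K.erase m := fun h => hj (mem_of_mem_erase h)
    have hcard : (insert j (K.erase m)).card = k := by
      rw [card_insert_of_notMem hj', card_erase_of_mem hmK]; omega
    have hmax := hKmax _ (mem_powersetCard.2 ⟨subset_univ _, hcard⟩)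
    have hsum := add_sum_erase K d hmK
    simp only [sum_insert hj'] at hmax
    linarith
  set Y := ∑ j, y j with hY
  have hY0 : 0 ≤ Y := sum_nonneg fun i _ => hy i
  have hexcess : ∑ i, (d i - d m) * (k * y i) ≤ ∑ i ∈ K, (d i - d m) * Y := by
    rw [← univ_inter K, ← sum_ite_mem]
    refine sum_le_sum fun i _ => ?_
    split_ifs with hi
    · exact mul_le_mul_of_nonneg_left (hle i) (sub_nonneg.2 (hmin i hi))
    · exact mul_nonpos_of_nonpos_of_nonneg (sub_nonpos.2 (hout i hi))
        (mul_nonneg k.cast_nonneg (hy i))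
  have hleft : ∑ i, (d i - d m) * (k * y i) = k * ∑ i, d i * y i - d m * k * Y := by
    rw [hY, mul_sum, mul_sum, ← sum_sub_distrib]
    exact sum_congr rfl fun i _ => by ring
  have hright : ∑ i ∈ K, (d i - d m) * Y = (∑ i ∈ K, d i) * Y - d m * k * Y := by
    rw [← sum_mul, sum_sub_distrib, sum_const, hKcard, nsmul_eq_mul]
    ring
  have hk0 : (0 : ℝ) < k := Nat.cast_pos.2 hk
  have hKY := mul_nonpos_of_nonpos_of_nonneg (hd K hKcard) hY0
  exact nonpos_of_mul_nonpos_right (by linarith) hk0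

/-- With positive scores, a point `x` of the simplex is instantaneously realizable as soon as no
ratio `x i / s v i` exceeds a `1/k` fraction of the sum of these ratios. -/
lemma mem_IRD_of_mul_div_le_sum {n k : ℕ} (hk : 0 < k) (hkn : k ≤ n)
    {s : (Fin n → ℝ) → Fin n → ℝ} {v x : Fin n → ℝ} (hs : ∀ i, 0 < s v i)
    (hx : x ∈ stdSimplex ℝ (Fin n))
    (hle : ∀ i, (k : ℝ) * (x i / s v i) ≤ ∑ j, x j / s v j) : x ∈ IRD k s v := by
  by_contra hnot
  have hfin : {p | ∃ K : Finset (Fin n), K.card = k ∧ p = menuDist s v K}.Finite :=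
    (Set.finite_range (menuDist s v)).subset fun p ⟨K, _, hp⟩ => ⟨K, hp.symm⟩
  obtain ⟨f, u, hfu, hux⟩ := geometric_hahn_banach_closed_point (convex_convexHull ℝ _)
    (hfin.isClosed_convexHull (𝕜 := ℝ)) hnot
  set c : Fin n → ℝ := fun i => f fun j => if i = j then 1 else 0
  have hf : ∀ z, f z = ∑ i, z i * c i := fun z => f.toLinearMap.pi_apply_eq_sum_univ z
  have hmenu : ∀ K : Finset (Fin n), K.card = k → ∑ i ∈ K, (c i - u) * s v i ≤ 0 := by
    intro K hK
    have hS : 0 < ∑ j ∈ K, s v j := sum_pos (fun i _ => hs i) (card_pos.1 (hK ▸ hk))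
    have hlt := hfu _ (subset_convexHull ℝ _ ⟨K, hK, rfl⟩)
    have hval : f (menuDist s v K) = (∑ i ∈ K, c i * s v i) / ∑ j ∈ K, s v j := by
      rw [hf, sum_div]
      simp only [menuDist, ite_mul, zero_mul, sum_ite_mem, univ_inter]
      exact sum_congr rfl fun i _ => by ring
    rw [hval, div_lt_iff₀ hS] at hlt
    simp only [sub_mul, sum_sub_distrib, ← mul_sum]
    linarith
  have hnonpos := sum_mul_nonpos_of_forall_card_eq hk (by simpa using hkn)
    (fun i => (c i - u) * s v i) (fun i => x i / s v i)
    (fun i => div_nonneg (hx.1 i) (hs i).le) hle hmenu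
  have hsum : ∑ i, (c i - u) * s v i * (x i / s v i) = f x - u := by
    have hu : u = ∑ i, u * x i := by rw [← mul_sum, hx.2, mul_one]
    calc ∑ i, (c i - u) * s v i * (x i / s v i) = ∑ i, (x i * c i - u * x i) := by
          refine sum_congr rfl fun i _ => ?_
          rw [mul_assoc, mul_div_cancel₀ _ (hs i).ne']
          ring
      _ = f x - u := by rw [sum_sub_distrib, ← hf, ← hu]
  linarith

/-- For a `λ`-dispersed preference model with `λ ≥ k²/n`, every point of the simplex within
`ℓ∞`-distance `(k−1)/(n(n−1))` of the uniform vector lies in `IRD(v)` for every memory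
vector `v`; i.e., this `ℓ∞`-ball (intersected with the simplex) is contained in `EIRD`. -/
theorem linf_ball_subset_EIRD {n k : ℕ} (hk : 2 ≤ k) (hkn : k ≤ n)
    (lam : ℝ) (hlam0 : 0 < lam) (hlam1 : lam ≤ 1)
    (hlamn : (k : ℝ) ^ 2 / n ≤ lam)
    (s : (Fin n → ℝ) → Fin n → ℝ)
    (hdisp : ∀ v ∈ stdSimplex ℝ (Fin n), ∀ i, lam ≤ s v i ∧ s v i ≤ 1) :
    ∀ x ∈ stdSimplex ℝ (Fin n),
      (∀ i : Fin n, |x i - 1 / n| ≤ ((k : ℝ) - 1) / (n * ((n : ℝ) - 1))) →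
      ∀ v ∈ stdSimplex ℝ (Fin n), x ∈ IRD k s v := by
  intro x hx hball v hv
  have hs : ∀ i, 0 < s v i := fun i => hlam0.trans_le (hdisp v hv i).1
  refine mem_IRD_of_mul_div_le_sum (by omega) hkn hs hx fun i => ?_
  have hk2 : (2 : ℝ) ≤ k := by exact_mod_cast hk
  have hkn' : (k : ℝ) ≤ n := by exact_mod_cast hkn
  have hn0 : (0 : ℝ) < n := by linarith
  have hn1 : (0 : ℝ) < n - 1 := by linarith
  have hone : 1 ≤ ∑ j, x j / s v j := by
    rw [← hx.2]
    exact sum_le_sum fun j _ => le_div_self (hx.1 j) (hs j) (hdisp v hv j).2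
  have hupper : x i ≤ k / n := by
    have hsum : x i ≤ 1 / n + ((k : ℝ) - 1) / (n * ((n : ℝ) - 1)) := by
      linarith [(abs_le.1 (hball i)).2]
    have hrad : ((k : ℝ) - 1) / (n * ((n : ℝ) - 1)) ≤ ((k : ℝ) - 1) / n :=
      div_le_div_of_nonneg_left (by linarith) hn0 (by nlinarith)
    calc x i ≤ 1 / n + ((k : ℝ) - 1) / n := by linarith
      _ = k / n := by ring
  refine le_trans ?_ hone
  rw [← mul_div_assoc, div_le_one (hs i)]
  calc (k : ℝ) * x i ≤ k * (k / n) := mul_le_mul_of_nonneg_left hupper (by linarith)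
    _ = (k : ℝ) ^ 2 / n := by ring
    _ ≤ lam := hlamn
    _ ≤ s v i := (hdisp v hv i).1
end

section
/- Let n ≥ k ≥ 2 be integers, let λ ∈ (0,1], and let s be a λ-dispersed preference model on n items. Let A ⊆ {1,…,n} be a subset with |A| ≥ k and λ ≥ k²/|A|. Then the uniform distribution on A (the vector assigning mass 1/|A| to each item of A and 0 to all other items) lies in IRD(v) for every v ∈ Δ(n), and hence lies in EIRD. Equivalently, if λ ≥ Ck²/n for some C ≥ 1, then EIRD contains the uniform distribution over any subset of at least n/C items. -/
open Finset

/-- Among the `k`-element subsets of a finite type there is one on which a given function is at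
least as large as anywhere outside of it. -/
lemma exists_card_eq_forall_le {ι : Type*} [Fintype ι] [DecidableEq ι] {k : ℕ}
    (hk : k ≤ Fintype.card ι) (c : ι → ℝ) :
    ∃ K : Finset ι, K.card = k ∧ ∀ i ∈ K, ∀ j ∉ K, c j ≤ c i := by
  obtain ⟨K, hK, hmax⟩ := Finset.exists_max_image (powersetCard k (univ : Finset ι))
    (fun K => ∑ i ∈ K, c i) (powersetCard_nonempty.2 hk)
  have hcard : K.card = k := (mem_powersetCard.1 hK).2
  refine ⟨K, hcard, fun i hi j hj => ?_⟩
  have hj' : j ∉ K.erase i := fun h => hj (mem_of_mem_erase h)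
  have hswap := hmax (insert j (K.erase i)) (mem_powersetCard.2 ⟨subset_univ _, by
    rw [card_insert_of_notMem hj', card_erase_add_one hi, hcard]⟩)
  rw [sum_insert hj', ← add_sum_erase K c hi] at hswap
  linarith

/-- A linear functional on a scaled hypersimplex is bounded by its value at some vertex. -/
lemma exists_card_eq_mul_sum_le {ι : Type*} [Fintype ι] {k : ℕ} (hk0 : 0 < k)
    (hk : k ≤ Fintype.card ι) (c x : ι → ℝ) (hx : ∀ i, 0 ≤ x i)
    (hxk : ∀ i, k * x i ≤ ∑ j, x j) :
    ∃ K : Finset ι, K.card = k ∧ k * ∑ i, c i * x i ≤ (∑ i, x i) * ∑ i ∈ K, c i := by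
  classical
  obtain ⟨K, hcard, hK⟩ := exists_card_eq_forall_le hk c
  refine ⟨K, hcard, ?_⟩
  obtain ⟨m, hm, hmin⟩ := Finset.exists_min_image K c (card_pos.1 (hcard ▸ hk0))
  set X := ∑ i, x i
  have hterm : ∀ i, (c i - c m) * (k * x i) ≤ if i ∈ K then (c i - c m) * X else 0 := by
    intro i
    split_ifs with hi
    · exact mul_le_mul_of_nonneg_left (hxk i) (sub_nonneg.2 (hmin i hi))
    · exact mul_nonpos_of_nonpos_of_nonneg (sub_nonpos.2 (hK m hm i hi))
        (mul_nonneg k.cast_nonneg (hx i))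
  have hsum := Finset.sum_le_sum fun i (_ : i ∈ (univ : Finset ι)) => hterm i
  have hleft : ∑ i, (c i - c m) * (k * x i) = k * ∑ i, c i * x i - c m * k * X := by
    simp only [X, mul_sum, ← sum_sub_distrib]
    exact sum_congr rfl fun i _ => by ring
  have hright : (∑ i, if i ∈ K then (c i - c m) * X else 0) =
      X * ∑ i ∈ K, c i - c m * k * X := by
    rw [sum_ite_mem, univ_inter, ← sum_mul, sum_sub_distrib, sum_const, hcard, nsmul_eq_mul]
    ring
  linarith

/-- A distribution is instantaneously realizable as soon as its score-weighted version puts at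
most a `1 / k` fraction of the total mass on each item. -/
lemma mem_IRD_of_forall_mul_div_le {n k : ℕ} (hk0 : 0 < k) (hkn : k ≤ n)
    {s : (Fin n → ℝ) → Fin n → ℝ} {v : Fin n → ℝ} (hs : ∀ i, 0 < s v i)
    {p : Fin n → ℝ} (hp : p ∈ stdSimplex ℝ (Fin n))
    (hpk : ∀ i, k * (p i / s v i) ≤ ∑ j, p j / s v j) :
    p ∈ IRD k s v := by
  by_contra hmem
  have hfin : { q | ∃ K : Finset (Fin n), K.card = k ∧ q = menuDist s v K }.Finite :=
    (Set.finite_range (menuDist s v)).subset (by rintro q ⟨K, -, rfl⟩; exact ⟨K, rfl⟩)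
  obtain ⟨f, u, hf, hu⟩ := geometric_hahn_banach_closed_point (convex_convexHull ℝ _)
    (hfin.isClosed_convexHull ℝ) hmem
  set l : Fin n → ℝ := fun i => f (Pi.single i 1)
  have hfl : ∀ y, f y = ∑ i, y i * l i := fun y => by
    conv_lhs => rw [pi_eq_sum_univ' y]
    simp [l, map_sum]
  obtain ⟨K, hcard, hK⟩ := exists_card_eq_mul_sum_le hk0 (by simpa using hkn)
    (fun i => s v i * (l i - u)) (fun i => p i / s v i)
    (fun i => div_nonneg (hp.1 i) (hs i).le) hpk
  have hleft : ∑ i, s v i * (l i - u) * (p i / s v i) = f p - u := by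
    have hterm : ∀ i, s v i * (l i - u) * (p i / s v i) = p i * l i - p i * u := fun i => by
      have := (hs i).ne'
      field_simp
    simp only [hterm, sum_sub_distrib, ← sum_mul, hp.2, one_mul, hfl p]
  have hS : 0 < ∑ j ∈ K, s v j :=
    sum_pos (fun i _ => hs i) (card_pos.1 (hcard ▸ hk0))
  have hmenu : f (menuDist s v K) = (∑ i ∈ K, s v i * l i) / ∑ j ∈ K, s v j := by
    simp only [hfl, menuDist, ite_mul, zero_mul, sum_ite_mem, univ_inter, sum_div]
    exact sum_congr rfl fun i _ => by ring
  have hlt := hf _ (subset_convexHull ℝ _ ⟨K, hcard, rfl⟩)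
  rw [hmenu, div_lt_iff₀ hS] at hlt
  have hneg : ∑ i ∈ K, s v i * (l i - u) ≤ 0 := by
    simp only [mul_sub, sum_sub_distrib, ← sum_mul]
    linarith
  have hpos : 0 < (k : ℝ) * (f p - u) := mul_pos (by exact_mod_cast hk0) (sub_pos.2 hu)
  have hX : 0 ≤ ∑ i, p i / s v i := sum_nonneg fun i _ => div_nonneg (hp.1 i) (hs i).le
  rw [hleft] at hK
  exact absurd (hK.trans (mul_nonpos_of_nonneg_of_nonpos hX hneg)) hpos.not_ge

/-- For a `λ`-dispersed preference model and a subset `A` of items with `|A| ≥ k` and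
`λ ≥ k²/|A|`, the uniform distribution over `A` lies in `IRD(v)` for every memory vector
`v`, and hence in `EIRD`. -/
theorem subset_uniform_mem_IRD {n k : ℕ} (hk : 2 ≤ k) (hkn : k ≤ n)
    (lam : ℝ) (hlam0 : 0 < lam) (hlam1 : lam ≤ 1)
    (s : (Fin n → ℝ) → Fin n → ℝ)
    (hdisp : ∀ v ∈ stdSimplex ℝ (Fin n), ∀ i, lam ≤ s v i ∧ s v i ≤ 1)
    (A : Finset (Fin n)) (hA : k ≤ A.card)
    (hlamA : (k : ℝ) ^ 2 / A.card ≤ lam) :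
    ∀ v ∈ stdSimplex ℝ (Fin n),
      (fun i : Fin n => if i ∈ A then 1 / (A.card : ℝ) else 0) ∈ IRD k s v := by
  intro v hv
  have hs : ∀ i, 0 < s v i := fun i => hlam0.trans_le (hdisp v hv i).1
  have hA0 : (0 : ℝ) < A.card := by exact_mod_cast (by omega : 0 < A.card)
  have hk1 : (1 : ℝ) ≤ k := by exact_mod_cast (by omega : 1 ≤ k)
  have hp : (fun i : Fin n => if i ∈ A then 1 / (A.card : ℝ) else 0) ∈ stdSimplex ℝ (Fin n) := by
    refine ⟨fun i => by positivity, ?_⟩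
    rw [sum_ite_mem, univ_inter, sum_const, nsmul_eq_mul, mul_one_div_cancel hA0.ne']
  refine mem_IRD_of_forall_mul_div_le (by omega) hkn hs hp fun i => ?_
  calc _ ≤ (1 : ℝ) := by
        split_ifs
        · have hscore : (k : ℝ) ^ 2 / A.card ≤ s v i := hlamA.trans (hdisp v hv i).1
          rw [div_le_iff₀ hA0] at hscore
          rw [div_div, mul_one_div, div_le_one (mul_pos hA0 (hs i))]
          nlinarith
        · simp
    _ = _ := hp.2.symm
    _ ≤ _ := sum_le_sum fun j _ => le_div_self (hp.1 j) (hs j) (hdisp v hv j).2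
end

section
/- Let n ≥ 1, let i_1, …, i_T be a sequence of items with empirical distributions v_1, …, v_T, and let v, v' ∈ Δ(n). If v_t = v and v_{t'} = v' for some 1 ≤ t ≤ t' ≤ T, then t' ≥ t · (1 + d_max(v, v')). -/
open Finset

/-- The empirical distribution after `t` rounds of the item sequence `it`
(round `r`, for `1 ≤ r ≤ t`, selects item `it (r-1)`). -/
noncomputable def emp {n : ℕ} (it : ℕ → Fin n) (t : ℕ) : Fin n → ℝ :=
  fun j => (∑ r ∈ Finset.range t, if it r = j then (1 : ℝ) else 0) / t

/-- `d_max(v, v') = max_i (v_i − v'_i)`. -/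
noncomputable def dmax {n : ℕ} (v v' : Fin n → ℝ) : ℝ :=
  ⨆ i, (v i - v' i)

/-- The empirical frequency of an item decreases by at most `(t' - t) / t` between times
`t` and `t'`. -/
lemma emp_sub_emp_le {n : ℕ} (it : ℕ → Fin n) {t t' : ℕ} (ht : 1 ≤ t) (htt' : t ≤ t')
    (j : Fin n) : emp it t j - emp it t' j ≤ ((t' : ℝ) - t) / t := by
  have ht0 : (0 : ℝ) < t := by exact_mod_cast ht
  have htle : (t : ℝ) ≤ t' := by exact_mod_cast htt'
  have ht'0 : (0 : ℝ) < t' := ht0.trans_le htle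
  unfold emp
  set c := ∑ r ∈ Finset.range t, if it r = j then (1 : ℝ) else 0
  set c' := ∑ r ∈ Finset.range t', if it r = j then (1 : ℝ) else 0
  have hcc' : c ≤ c' :=
    Finset.sum_le_sum_of_subset_of_nonneg (Finset.range_mono htt')
      fun r _ _ => by split_ifs <;> norm_num
  have hct : c ≤ t := by
    calc c ≤ ∑ _r ∈ Finset.range t, (1 : ℝ) :=
          Finset.sum_le_sum fun r _ => by split_ifs <;> norm_num
      _ = t := by simp
  have hmul : c * (t' - t) ≤ t' * (t' - t) :=
    mul_le_mul_of_nonneg_right (hct.trans htle) (sub_nonneg.2 htle)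
  calc c / t - c' / t' ≤ c / t - c / t' := by gcongr
    _ = c * (t' - t) / t' / t := by field_simp
    _ ≤ (t' - t) / t := by
      gcongr
      rw [div_le_iff₀ ht'0]
      linarith

/-- If the empirical distribution equals `v` at time `t ≥ 1` and `v'` at a later time
`t' ≥ t`, then `t' ≥ t · (1 + d_max(v, v'))`. -/
theorem emp_time_lower_bound {n : ℕ} (hn : 1 ≤ n) (it : ℕ → Fin n)
    (T t t' : ℕ) (ht : 1 ≤ t) (htt' : t ≤ t') (ht'T : t' ≤ T)
    (v v' : Fin n → ℝ) (hv : emp it t = v) (hv' : emp it t' = v') :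
    (t : ℝ) * (1 + dmax v v') ≤ (t' : ℝ) := by
  subst hv hv'
  have : Nonempty (Fin n) := ⟨⟨0, hn⟩⟩
  have ht0 : (0 : ℝ) < t := by exact_mod_cast ht
  have hd : dmax (emp it t) (emp it t') ≤ ((t' : ℝ) - t) / t :=
    ciSup_le (emp_sub_emp_le it ht htt')
  rw [le_div_iff₀ ht0] at hd
  linarith
end

section
/- Let n ≥ 1 and let S be a finite nonempty subset of Δ(n). Let i_1, …, i_T be any sequence of items such that for every v ∈ S there exists some t ∈ {1,…,T} with v_t = v (i.e., every point of S is realized as an empirical distribution at some time). Then T ≥ min_{σ} ∏_{i=1}^{|S|−1} (1 + d_max(σ(i), σ(i+1))), where the minimum is over all bijections σ from {1,…,|S|} to S. -/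
open Finset

/-- Empirical counts `t · v_t` are coordinatewise nondecreasing in the time `t`. -/
lemma mul_emp_mono {n : ℕ} (it : ℕ → Fin n) (i : Fin n) :
    Monotone fun t : ℕ => (t : ℝ) * emp it t i := by
  have key (t : ℕ) : (t : ℝ) * emp it t i =
      ∑ r ∈ Finset.range t, if it r = i then (1 : ℝ) else 0 := by
    rcases Nat.eq_zero_or_pos t with rfl | ht
    · simp
    · have : (t : ℝ) ≠ 0 := by positivity
      simp only [emp]
      field_simp
  refine monotone_nat_of_le_succ fun t => ?_
  rw [key, key, Finset.sum_range_succ]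
  split_ifs <;> simp

lemma emp_nonneg {n : ℕ} (it : ℕ → Fin n) (t : ℕ) (i : Fin n) : 0 ≤ emp it t i :=
  div_nonneg (Finset.sum_nonneg fun r _ => by split_ifs <;> norm_num) t.cast_nonneg

lemma emp_le_one {n : ℕ} (it : ℕ → Fin n) (t : ℕ) (i : Fin n) : emp it t i ≤ 1 := by
  refine div_le_one_of_le₀ ?_ t.cast_nonneg
  calc (∑ r ∈ Finset.range t, if it r = i then (1 : ℝ) else 0)
      ≤ ∑ _r ∈ Finset.range t, (1 : ℝ) :=
        Finset.sum_le_sum fun r _ => by split_ifs <;> norm_num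
    _ = t := by simp

lemma one_add_dmax_emp_nonneg {n : ℕ} (hn : 1 ≤ n) (it : ℕ → Fin n) (t t' : ℕ) :
    0 ≤ 1 + dmax (emp it t) (emp it t') := by
  have hle : emp it t ⟨0, hn⟩ - emp it t' ⟨0, hn⟩ ≤ dmax (emp it t) (emp it t') :=
    le_ciSup (f := fun i => emp it t i - emp it t' i) (Set.finite_range _).bddAbove ⟨0, hn⟩
  linarith [emp_nonneg it t ⟨0, hn⟩, emp_le_one it t' ⟨0, hn⟩]

/-- Moving from one empirical distribution to a later one multiplies the time by at least
`1 + d_max` of the two distributions. -/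
lemma mul_one_add_dmax_emp_le {n : ℕ} (hn : 1 ≤ n) (it : ℕ → Fin n) {t t' : ℕ}
    (ht : 1 ≤ t) (htt' : t ≤ t') :
    (t : ℝ) * (1 + dmax (emp it t) (emp it t')) ≤ t' := by
  have : Nonempty (Fin n) := ⟨⟨0, hn⟩⟩
  have ht0 : (0 : ℝ) < t := by exact_mod_cast ht
  have hle : (t : ℝ) ≤ t' := by exact_mod_cast htt'
  have hd : dmax (emp it t) (emp it t') ≤ (t' - t) / t := by
    refine ciSup_le fun i => ?_
    rw [le_div_iff₀ ht0]
    have hmono : (t : ℝ) * emp it t i ≤ t' * emp it t' i := mul_emp_mono it i htt'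
    nlinarith [mul_nonneg (sub_nonneg.2 hle) (sub_nonneg.2 (emp_le_one it t' i))]
  rw [le_div_iff₀ ht0] at hd
  linarith

/-- Along increasing positive times, the product of the factors `1 + d_max` of consecutive
empirical distributions is at most the last time. -/
lemma prod_one_add_dmax_emp_le {n : ℕ} (hn : 1 ≤ n) (it : ℕ → Fin n) (τ : ℕ → ℕ) (k : ℕ)
    (hpos : ∀ j ≤ k, 1 ≤ τ j) (hmono : ∀ j < k, τ j ≤ τ (j + 1)) :
    ∏ j ∈ Finset.range k, (1 + dmax (emp it (τ j)) (emp it (τ (j + 1)))) ≤ (τ k : ℝ) := by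
  induction k with
  | zero => simpa using hpos 0 le_rfl
  | succ k ih =>
    rw [Finset.prod_range_succ]
    exact (mul_le_mul_of_nonneg_right
      (ih (fun j hj => hpos j (by omega)) fun j hj => hmono j (by omega))
      (one_add_dmax_emp_nonneg hn it _ _)).trans
      (mul_one_add_dmax_emp_le hn it (hpos k (by omega)) (hmono k (by omega)))

/-- If every point of a finite set `S` of distributions is realized as an empirical
distribution at some time `t ≤ T`, then `T` is at least the minimum over all orderings
`σ` of `S` of `∏_{i=1}^{|S|−1} (1 + d_max(σ(i), σ(i+1)))`; equivalently, some ordering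
`σ` of `S` has `∏_{i=1}^{|S|−1} (1 + d_max(σ(i), σ(i+1))) ≤ T`. -/
theorem query_learning_time_lower_bound {n : ℕ} (hn : 1 ≤ n) (T : ℕ)
    (it : ℕ → Fin n) (S : Finset (Fin n → ℝ)) (hS : S.Nonempty)
    (hreal : ∀ v ∈ S, ∃ t, 1 ≤ t ∧ t ≤ T ∧ emp it t = v) :
    ∃ σ : ℕ → (Fin n → ℝ),
      (∀ j < S.card, σ j ∈ S) ∧
      Set.InjOn σ (Finset.range S.card) ∧
      ∏ j ∈ Finset.range (S.card - 1), (1 + dmax (σ j) (σ (j + 1))) ≤ (T : ℝ) := by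
  choose! time hpos hleT htime using hreal
  have hinj : Set.InjOn time S := fun v hv w hw h => by
    rw [← htime v hv, ← htime w hw, h]
  have hcard : (S.image time).card = S.card := Finset.card_image_of_injOn hinj
  have hS0 : 0 < S.card := hS.card_pos
  have hfin : {x | x ∈ S.image time}.Finite := (S.image time).finite_toSet
  have hfcard : hfin.toFinset.card = S.card := by
    rw [← hcard]
    congr 1
    ext
    simp
  let τ : ℕ → ℕ := Nat.nth (· ∈ S.image time)
  have hτ : ∀ j < S.card, ∃ v ∈ S, time v = τ j := fun j hj =>
    Finset.mem_image.1 (Nat.nth_mem_of_lt_card hfin (by rwa [hfcard]))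
  have hlt : ∀ i j, i < j → j < S.card → τ i < τ j := fun i j hij hj =>
    Nat.nth_lt_nth_of_lt_card hfin hij (by rwa [hfcard])
  refine ⟨fun j => emp it (τ j), fun j hj => ?_, fun i hi j hj hij => ?_, ?_⟩
  · obtain ⟨v, hv, h⟩ := hτ j hj
    simpa only [← h, htime v hv] using hv
  · have hi' : i < S.card := by simpa using hi
    have hj' : j < S.card := by simpa using hj
    obtain ⟨v, hv, hvi⟩ := hτ i hi'
    obtain ⟨w, hw, hwj⟩ := hτ j hj'
    have hvw : v = w := by
      simpa only [← hvi, ← hwj, htime v hv, htime w hw] using hij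
    have hτij : τ i = τ j := by rw [← hvi, ← hwj, hvw]
    rcases lt_trichotomy i j with h | h | h
    · exact absurd hτij (hlt i j h hj').ne
    · exact h
    · exact absurd hτij (hlt j i h hi').ne'
  · refine (prod_one_add_dmax_emp_le hn it τ (S.card - 1) (fun j hj => ?_) fun j hj =>
      (hlt j (j + 1) j.lt_succ_self (by omega)).le).trans ?_
    · obtain ⟨v, hv, h⟩ := hτ j (by omega)
      exact h ▸ hpos v hv
    · obtain ⟨v, hv, h⟩ := hτ (S.card - 1) (by omega)
      exact_mod_cast h ▸ hleT v hv
end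

section
/- Let T ≥ 1, let G, D > 0, and let K_1 ⊇ K_2 ⊇ ⋯ ⊇ K_T be nonempty closed convex subsets of ℝ^m, each of diameter at most D (i.e., ‖a − b‖ ≤ D for all a, b in K_t). Let ℓ_1, …, ℓ_T : ℝ^m → ℝ be convex differentiable functions with ‖∇ℓ_t(x)‖ ≤ G for all x ∈ ℝ^m and all t. Set η = D/(G√T), let x_1 ∈ K_1, and define x_{t+1} = Π_{K_{t+1}}(x_t − η ∇ℓ_t(x_t)) for 1 ≤ t ≤ T−1. Then for every x* ∈ K_T, Σ_{t=1}^{T} ℓ_t(x_t) − Σ_{t=1}^{T} ℓ_t(x*) ≤ G·D·√T. -/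
open Finset

/-- First-order characterization of convexity: a convex function lies above its tangent planes. -/
theorem ConvexOn.sub_le_inner_of_hasGradientAt {E : Type*} [NormedAddCommGroup E]
    [InnerProductSpace ℝ E] [CompleteSpace E] {f : E → ℝ} {g x : E}
    (hf : ConvexOn ℝ Set.univ f) (hg : HasGradientAt f g x) (y : E) :
    f x - f y ≤ inner ℝ g (x - y) := by
  have hline : HasDerivAt (AffineMap.lineMap x y : ℝ → E) (y - x) 0 :=
    AffineMap.hasDerivAt_lineMap
  have hconv : ConvexOn ℝ Set.univ (f ∘ (AffineMap.lineMap x y : ℝ → E)) :=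
    hf.comp_affineMap (AffineMap.lineMap x y)
  have hderiv : HasDerivAt (f ∘ (AffineMap.lineMap x y : ℝ → E)) (inner ℝ g (y - x)) 0 := by
    have hg' : HasFDerivAt f (InnerProductSpace.toDual ℝ E g)
        ((AffineMap.lineMap x y : ℝ → E) 0) := by
      simpa using hg.hasFDerivAt
    simpa using hg'.comp_hasDerivAt (0 : ℝ) hline
  have hslope := hconv.le_slope_of_hasDerivAt (Set.mem_univ 0) (Set.mem_univ 1) one_pos hderiv
  simp only [slope_def_field, Function.comp_apply, AffineMap.lineMap_apply_zero,
    AffineMap.lineMap_apply_one, sub_zero, div_one] at hslope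
  rw [← neg_sub y x, inner_neg_right]
  linarith

/-- A nearest point `p` of a convex set to `u` is at least as close as `u` to every point of
the set. -/
theorem Convex.norm_sub_le_of_forall_norm_sub_le {E : Type*} [NormedAddCommGroup E]
    [InnerProductSpace ℝ E] {K : Set E} (hK : Convex ℝ K) {u p z : E} (hp : p ∈ K)
    (hmin : ∀ y ∈ K, ‖p - u‖ ≤ ‖y - u‖) (hz : z ∈ K) : ‖p - z‖ ≤ ‖u - z‖ := by
  have : Nonempty K := ⟨⟨p, hp⟩⟩
  have hinf : ‖u - p‖ = ⨅ w : K, ‖u - w‖ := by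
    refine le_antisymm (le_ciInf fun w => ?_)
      (ciInf_le (f := fun w : K => ‖u - w‖) ⟨0, ?_⟩ ⟨p, hp⟩)
    · simpa only [norm_sub_rev] using hmin w w.2
    · rintro _ ⟨w, rfl⟩
      exact norm_nonneg _
  have hinner := (norm_eq_iInf_iff_real_inner_le_zero hK hp).1 hinf z hz
  have hexp := norm_sub_sq_real (u - p) (z - p)
  rw [sub_sub_sub_cancel_right] at hexp
  rw [← norm_sub_rev z p]
  exact le_of_sq_le_sq (by nlinarith [sq_nonneg ‖u - p‖]) (norm_nonneg _)

/-- One gradient step decreases the squared distance to `z` by at least twice the weighted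
excess loss, up to a second-order term. -/
theorem ConvexOn.two_mul_sub_le_of_hasGradientAt {E : Type*} [NormedAddCommGroup E]
    [InnerProductSpace ℝ E] [CompleteSpace E] {f : E → ℝ} {g x : E} {G η : ℝ}
    (hf : ConvexOn ℝ Set.univ f) (hg : HasGradientAt f g x) (hG : ‖g‖ ≤ G) (hη : 0 ≤ η) (z : E) :
    2 * η * (f x - f z) ≤ ‖x - z‖ ^ 2 + η ^ 2 * G ^ 2 - ‖x - η • g - z‖ ^ 2 := by
  have hexp := norm_sub_sq_real (x - z) (η • g)
  rw [sub_right_comm, inner_smul_right, real_inner_comm, norm_smul, mul_pow, Real.norm_eq_abs,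
    sq_abs] at hexp
  have hfirst := mul_le_mul_of_nonneg_left (hf.sub_le_inner_of_hasGradientAt hg z) hη
  have hsq : η ^ 2 * ‖g‖ ^ 2 ≤ η ^ 2 * G ^ 2 := by gcongr
  linarith

/-- Regret bound for online gradient descent over a contracting sequence of decision sets:
if `x_{t+1}` is the metric projection of `x_t − η ∇ℓ_t(x_t)` onto `K_{t+1}`, where the
convex decision sets `K_t` are nested decreasing with diameter at most `D`, the gradients
are bounded by `G`, and `η = D/(G√T)`, then the regret against any `x* ∈ K_T` is at most
`G·D·√T`. -/
theorem contracting_ogd_regret {m T : ℕ} (hT : 1 ≤ T) (G D : ℝ)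
    (hG : 0 < G) (hD : 0 < D)
    (K : ℕ → Set (EuclideanSpace ℝ (Fin m)))
    (hKne : ∀ t, 1 ≤ t → t ≤ T → (K t).Nonempty)
    (hKclosed : ∀ t, 1 ≤ t → t ≤ T → IsClosed (K t))
    (hKconv : ∀ t, 1 ≤ t → t ≤ T → Convex ℝ (K t))
    (hKmono : ∀ t, 1 ≤ t → t + 1 ≤ T → K (t + 1) ⊆ K t)
    (hKdiam : ∀ t, 1 ≤ t → t ≤ T → ∀ a ∈ K t, ∀ b ∈ K t, ‖a - b‖ ≤ D)
    (ℓ : ℕ → EuclideanSpace ℝ (Fin m) → ℝ)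
    (gr : ℕ → EuclideanSpace ℝ (Fin m) → EuclideanSpace ℝ (Fin m))
    (hconv : ∀ t, ConvexOn ℝ Set.univ (ℓ t))
    (hgrad : ∀ t x, HasGradientAt (ℓ t) (gr t x) x)
    (hGbd : ∀ t x, ‖gr t x‖ ≤ G)
    (η : ℝ) (hη : η = D / (G * Real.sqrt T))
    (x : ℕ → EuclideanSpace ℝ (Fin m))
    (hx1 : x 1 ∈ K 1)
    (hproj : ∀ t, 1 ≤ t → t + 1 ≤ T →
      x (t + 1) ∈ K (t + 1) ∧
      ∀ y ∈ K (t + 1),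
        ‖x (t + 1) - (x t - η • gr t (x t))‖ ≤ ‖y - (x t - η • gr t (x t))‖)
    (xstar : EuclideanSpace ℝ (Fin m)) (hxstar : xstar ∈ K T) :
    ∑ t ∈ Finset.Icc 1 T, ℓ t (x t) - ∑ t ∈ Finset.Icc 1 T, ℓ t xstar
      ≤ G * D * Real.sqrt T := by
  have hmem : ∀ t, t ≤ T → 1 ≤ t → xstar ∈ K t := fun t ht =>
    Nat.decreasingInduction' (P := fun t => 1 ≤ t → xstar ∈ K t)
      (fun k hk _ ih h1 => hKmono k h1 hk (ih (by omega))) ht (fun _ => hxstar)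
  have hTpos : (0 : ℝ) < T := by exact_mod_cast hT
  have hs : 0 < Real.sqrt T := Real.sqrt_pos.2 hTpos
  have hηpos : 0 < η := by rw [hη]; positivity
  have hstep := fun t => (hconv t).two_mul_sub_le_of_hasGradientAt (hgrad t (x t))
    (hGbd t (x t)) hηpos.le xstar
  have hsum : ∀ n, 1 ≤ n → n ≤ T →
      2 * η * ∑ t ∈ Finset.Icc 1 n, (ℓ t (x t) - ℓ t xstar) ≤
        D ^ 2 + n * (η ^ 2 * G ^ 2) - ‖x n - η • gr n (x n) - xstar‖ ^ 2 := by
    intro n hn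
    induction n, hn using Nat.le_induction with
    | base =>
      intro _
      have hdiam : ‖x 1 - xstar‖ ^ 2 ≤ D ^ 2 := by
        gcongr
        exact hKdiam 1 le_rfl hT _ hx1 _ (hmem 1 hT le_rfl)
      simpa using (hstep 1).trans (by linarith)
    | succ n hn ih =>
      intro hnT
      obtain ⟨hxK, hmin⟩ := hproj n hn hnT
      have hcontract : ‖x (n + 1) - xstar‖ ^ 2 ≤ ‖x n - η • gr n (x n) - xstar‖ ^ 2 := by
        gcongr
        exact (hKconv (n + 1) (by omega) hnT).norm_sub_le_of_forall_norm_sub_le hxK hmin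
          (hmem (n + 1) hnT (by omega))
      rw [Finset.sum_Icc_succ_top (by omega), mul_add]
      push_cast
      linarith [ih (by omega), hstep (n + 1)]
  have hηG : T * (η ^ 2 * G ^ 2) = D ^ 2 := by
    rw [hη, div_pow, mul_pow, Real.sq_sqrt hTpos.le]
    field_simp
  have hηD : η * (G * D * Real.sqrt T) = D ^ 2 := by
    rw [hη]
    field_simp
  rw [← Finset.sum_sub_distrib]
  refine le_of_mul_le_mul_left ?_ hηpos
  linarith [hsum T hT le_rfl, sq_nonneg ‖x T - η • gr T (x T) - xstar‖]
end

section
/- Let N ≥ 1 and let f : ℝ^N → ℝ be a multilinear polynomial (each variable appears with degree at most 1 in every monomial). Let m ⊆ {1,…,N} be a set of variables with |m| = d ≥ 1, and suppose |f(x)| ≤ 1 for all x ∈ [0, 1/d]^N. Then the coefficient of the monomial ∏_{i∈m} x_i in f has absolute value at most (d+1)·d^{2d}. -/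
open Finset

/-- Alternating sum of a monomial over the vertices of the cube `{0, t}^m`, the coordinates outside
`m` being zero. -/
lemma sum_powerset_neg_one_pow_mul_prod_pow {ι R : Type*} [Fintype ι] [DecidableEq ι] [CommRing R]
    (m : Finset ι) (t : R) (σ : ι → ℕ) :
    ∑ S ∈ m.powerset, (-1) ^ (m \ S).card * ∏ i, (if i ∈ S then t else 0) ^ σ i
      = (∏ i ∈ m, (t ^ σ i - 0 ^ σ i)) * ∏ i ∈ mᶜ, 0 ^ σ i := by
  simp_rw [sub_eq_add_neg]
  rw [Finset.prod_add, Finset.sum_mul]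
  refine Finset.sum_congr rfl fun S hS => ?_
  have hSm : S ⊆ m := Finset.mem_powerset.mp hS
  have hin : ∏ i ∈ S, (if i ∈ S then t else 0) ^ σ i = ∏ i ∈ S, t ^ σ i :=
    Finset.prod_congr rfl fun i hi => by rw [if_pos hi]
  have hdiff : ∏ i ∈ m \ S, (if i ∈ S then t else 0) ^ σ i = ∏ i ∈ m \ S, 0 ^ σ i :=
    Finset.prod_congr rfl fun i hi => by rw [if_neg (Finset.mem_sdiff.mp hi).2]
  have hout : ∏ i ∈ mᶜ, (if i ∈ S then t else 0) ^ σ i = ∏ i ∈ mᶜ, 0 ^ σ i :=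
    Finset.prod_congr rfl fun i hi => by
      rw [if_neg fun h => Finset.mem_compl.mp hi (hSm h)]
  rw [← Finset.prod_mul_prod_compl m, ← Finset.prod_sdiff hSm, hin, hdiff, hout,
    Finset.prod_neg]
  ring

/-- For a multilinear polynomial, the alternating sum of its values over the vertices of the cube
`{0, t}^m` isolates the coefficient of `∏ i ∈ m, X i`. -/
lemma MvPolynomial.sum_powerset_neg_one_pow_mul_eval {ι R : Type*} [Fintype ι] [DecidableEq ι]
    [CommRing R] (f : MvPolynomial ι R) (hml : ∀ σ ∈ f.support, ∀ i, σ i ≤ 1)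
    (m : Finset ι) (t : R) :
    ∑ S ∈ m.powerset, (-1) ^ (m \ S).card * MvPolynomial.eval (fun i => if i ∈ S then t else 0) f
      = t ^ m.card * f.coeff (∑ i ∈ m, Finsupp.single i 1) := by
  have hμ : ∀ i, (∑ j ∈ m, Finsupp.single j 1 : ι →₀ ℕ) i = if i ∈ m then 1 else 0 := by
    intro i
    simp [Finsupp.finsetSum_apply, Finsupp.single_apply]
  simp_rw [MvPolynomial.eval_eq', Finset.mul_sum]
  rw [Finset.sum_comm]
  simp_rw [mul_left_comm _ (MvPolynomial.coeff _ f), ← Finset.mul_sum,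
    sum_powerset_neg_one_pow_mul_prod_pow]
  rw [Finset.sum_eq_single (∑ i ∈ m, Finsupp.single i 1)]
  · have hin : ∏ i ∈ m, (t ^ (∑ j ∈ m, Finsupp.single j 1 : ι →₀ ℕ) i
        - 0 ^ (∑ j ∈ m, Finsupp.single j 1 : ι →₀ ℕ) i) = t ^ m.card :=
      Finset.prod_eq_pow_card fun i hi => by simp [hμ, hi]
    have hout : ∏ i ∈ mᶜ, (0 : R) ^ (∑ j ∈ m, Finsupp.single j 1 : ι →₀ ℕ) i = 1 :=
      Finset.prod_eq_one fun i hi => by simp [hμ, Finset.mem_compl.mp hi]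
    rw [hin, hout]
    ring
  · intro σ hσ hne
    obtain ⟨i, hi⟩ := DFunLike.ne_iff.mp hne
    rw [hμ] at hi
    have hle := hml σ hσ i
    by_cases him : i ∈ m
    · have h0 : σ i = 0 := by rw [if_pos him] at hi; omega
      rw [Finset.prod_eq_zero him (by simp [h0])]
      ring
    · have h0 : σ i ≠ 0 := by rwa [if_neg him] at hi
      rw [Finset.prod_eq_zero (Finset.mem_compl.mpr him) (zero_pow h0)]
      ring
  · intro h
    rw [MvPolynomial.notMem_support_iff.mp h, zero_mul]

lemma two_pow_le_succ_mul_pow_self (d : ℕ) (hd : 1 ≤ d) : 2 ^ d ≤ (d + 1) * d ^ d := by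
  obtain rfl | h := hd.eq_or_lt
  · norm_num
  · calc 2 ^ d ≤ d ^ d := Nat.pow_le_pow_left h d
      _ ≤ (d + 1) * d ^ d := Nat.le_mul_of_pos_left _ d.succ_pos

/-- A multilinear polynomial in `N` variables (every variable has individual degree at
most `1`) that is bounded by `1` on the box `[0, 1/d]^N` has the coefficient of any
degree-`d` monomial `∏_{i ∈ m} x_i` bounded in absolute value by `(d+1)·d^{2d}`. -/
theorem multilinear_coeff_bound (N : ℕ) (hN : 1 ≤ N)
    (f : MvPolynomial (Fin N) ℝ)
    (hml : ∀ σ ∈ f.support, ∀ i, σ i ≤ 1)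
    (m : Finset (Fin N)) (d : ℕ) (hd : 1 ≤ d) (hcard : m.card = d)
    (hbound : ∀ x : Fin N → ℝ, (∀ i, x i ∈ Set.Icc (0 : ℝ) (1 / d)) →
      |MvPolynomial.eval x f| ≤ 1) :
    |MvPolynomial.coeff (∑ i ∈ m, Finsupp.single i 1) f|
      ≤ ((d : ℝ) + 1) * (d : ℝ) ^ (2 * d) := by
  have hd0 : (0 : ℝ) < d := by exact_mod_cast hd
  have key := f.sum_powerset_neg_one_pow_mul_eval hml m (1 / d)
  rw [hcard] at key
  have hsum : |(1 / (d : ℝ)) ^ d * f.coeff (∑ i ∈ m, Finsupp.single i 1)| ≤ 2 ^ d := by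
    rw [← key]
    calc _ ≤ ∑ S ∈ m.powerset, |(-1) ^ (m \ S).card *
            MvPolynomial.eval (fun i => if i ∈ S then 1 / (d : ℝ) else 0) f| :=
          Finset.abs_sum_le_sum_abs _ _
      _ ≤ ∑ _S ∈ m.powerset, (1 : ℝ) := by
          refine Finset.sum_le_sum fun S _ => ?_
          rw [abs_mul, abs_neg_one_pow, one_mul]
          refine hbound _ fun i => ?_
          have h : (0 : ℝ) ≤ 1 / d := by positivity
          split_ifs
          exacts [⟨h, le_rfl⟩, ⟨le_rfl, h⟩]
      _ = 2 ^ d := by simp [hcard]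
  rw [abs_mul, abs_of_pos (by positivity), one_div, inv_pow,
    inv_mul_le_iff₀ (by positivity)] at hsum
  have hpow : (2 : ℝ) ^ d ≤ (d + 1) * (d : ℝ) ^ d := by
    exact_mod_cast two_pow_le_succ_mul_pow_self d hd
  calc _ ≤ (d : ℝ) ^ d * 2 ^ d := hsum
    _ ≤ (d : ℝ) ^ d * ((d + 1) * (d : ℝ) ^ d) := by gcongr
    _ = ((d : ℝ) + 1) * (d : ℝ) ^ (2 * d) := by ring
end

section
/- Let n ≥ 2 and let d ≥ 2 be an even integer. Let Z > 0 satisfy 1/n − d/(2Z) ≥ 0 and 1/n + d/(2Z) ≤ 1, and consider the d+1 distinct interpolation nodes x_0 = 1/n and x_{±j} = 1/n ± j/Z for j = 1, …, d/2, all lying in [0,1]. Then for every node index j and every x ∈ [0,1], the Lagrange basis polynomial L_j(x) = ∏_{k ≠ j} (x − x_k)/(x_j − x_k) satisfies |L_j(x)| ≤ Z^d / ((d/2)!)². -/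
open Finset

/-- The product of the distances from `j` to the other integers of `[j - a, j + b]`. -/
lemma prod_abs_sub_erase_Icc (j : ℤ) (a b : ℕ) :
    ∏ k ∈ (Icc (j - a) (j + b)).erase j, |(j : ℝ) - k| = (a.factorial : ℝ) * b.factorial := by
  induction a with
  | zero =>
    induction b with
    | zero => simp
    | succ b ih =>
      have h : (Icc (j - (0 : ℕ)) (j + (b + 1 : ℕ))).erase j
          = insert (j + (b + 1 : ℕ)) ((Icc (j - (0 : ℕ)) (j + b)).erase j) := by
        ext k
        simp only [mem_erase, mem_Icc, mem_insert]
        omega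
      rw [h, prod_insert (by simp), ih, Nat.factorial_succ b]
      have hb : |(j : ℝ) - ((j + (b + 1 : ℕ) : ℤ) : ℝ)| = b + 1 := by
        push_cast
        rw [sub_add_cancel_left, abs_neg, abs_of_nonneg (by positivity)]
      rw [hb]
      push_cast
      ring
  | succ a ih =>
    have h : (Icc (j - (a + 1 : ℕ)) (j + b)).erase j
        = insert (j - (a + 1 : ℕ)) ((Icc (j - a) (j + b)).erase j) := by
      ext k
      simp only [mem_erase, mem_Icc, mem_insert]
      omega
    rw [h, prod_insert (by simp only [mem_erase, mem_Icc]; omega), ih, Nat.factorial_succ a]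
    have ha : |(j : ℝ) - ((j - (a + 1 : ℕ) : ℤ) : ℝ)| = a + 1 := by
      push_cast
      rw [sub_sub_cancel, abs_of_nonneg (by positivity)]
    rw [ha]
    push_cast
    ring

lemma factorial_sq_le_factorial_mul_factorial {a b m : ℕ} (h : a + b = 2 * m) :
    m.factorial ^ 2 ≤ a.factorial * b.factorial := by
  have hab := Nat.add_choose_mul_factorial_mul_factorial a b
  have hmm := Nat.add_choose_mul_factorial_mul_factorial m m
  rw [h] at hab
  rw [← two_mul] at hmm
  have hle : (2 * m).choose b ≤ (2 * m).choose m := Nat.choose_le_centralBinom b m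
  have hpos : 0 < (2 * m).choose m := Nat.choose_pos (by omega)
  refine Nat.le_of_mul_le_mul_left ?_ hpos
  calc (2 * m).choose m * m.factorial ^ 2
      = (2 * m).choose b * (a.factorial * b.factorial) := by
        rw [sq, ← mul_assoc, ← mul_assoc, hmm, hab]
    _ ≤ _ := Nat.mul_le_mul_right _ hle

/-- Bound on Lagrange basis polynomials for the nodes `1/n + j/Z`, `j = −d/2, …, d/2`
(with `d` even), all lying in `[0,1]`: for every node index `j` and every `x ∈ [0,1]`,
`|L_j(x)| ≤ Z^d / ((d/2)!)²`. -/
theorem lagrange_basis_bound (n d : ℕ) (hn : 2 ≤ n) (hd : 2 ≤ d) (hdeven : Even d)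
    (Z : ℝ) (hZ : 0 < Z)
    (hlow : 0 ≤ 1 / (n : ℝ) - (d : ℝ) / (2 * Z))
    (hhigh : 1 / (n : ℝ) + (d : ℝ) / (2 * Z) ≤ 1)
    (node : ℤ → ℝ) (hnode : ∀ j : ℤ, node j = 1 / (n : ℝ) + (j : ℝ) / Z) :
    ∀ j ∈ Finset.Icc (-((d : ℤ) / 2)) ((d : ℤ) / 2), ∀ x ∈ Set.Icc (0 : ℝ) 1,
      |∏ k ∈ (Finset.Icc (-((d : ℤ) / 2)) ((d : ℤ) / 2)).erase j,
          (x - node k) / (node j - node k)|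
        ≤ Z ^ d / ((Nat.factorial (d / 2) : ℝ)) ^ 2 := by
  intro j hj x hx
  obtain ⟨m, rfl⟩ := hdeven.exists_two_nsmul
  simp only [smul_eq_mul] at *
  have hm : ((2 * m : ℕ) : ℤ) / 2 = m := by omega
  have hm' : 2 * m / 2 = m := by omega
  have hdm : ((2 * m : ℕ) : ℝ) / (2 * Z) = m / Z := by
    push_cast
    exact mul_div_mul_left _ _ two_ne_zero
  rw [hm] at hj ⊢
  rw [hm']
  rw [hdm] at hlow hhigh
  have hcard : ((Icc (-(m : ℤ)) m).erase j).card = 2 * m := by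
    rw [card_erase_of_mem hj, Int.card_Icc]
    omega
  have hterm : ∀ k ∈ (Icc (-(m : ℤ)) m).erase j,
      |(x - node k) / (node j - node k)| ≤ Z / |(j : ℝ) - k| := by
    intro k hk
    obtain ⟨-, hk⟩ := mem_erase.1 hk
    obtain ⟨hk₁, hk₂⟩ := mem_Icc.1 hk
    have hk₁' : -(m : ℝ) ≤ k := by exact_mod_cast hk₁
    have hk₂' : (k : ℝ) ≤ m := by exact_mod_cast hk₂
    have h₁ : -((m : ℝ) / Z) ≤ k / Z := by
      rw [← neg_div]
      gcongr
    have h₂ : (k : ℝ) / Z ≤ m / Z := by gcongr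
    have hnum : |x - node k| ≤ 1 := by
      rw [hnode, abs_le]
      constructor <;> linarith [hx.1, hx.2]
    have hden : |node j - node k| = |(j : ℝ) - k| / Z := by
      rw [hnode, hnode, add_sub_add_left_eq_sub, ← sub_div, abs_div, abs_of_pos hZ]
    rw [abs_div, hden, div_div_eq_mul_div]
    gcongr
    exact mul_le_of_le_one_left hZ.le hnum
  obtain ⟨hj₁, hj₂⟩ := mem_Icc.1 hj
  obtain ⟨a, ha⟩ := Int.eq_ofNat_of_zero_le (show 0 ≤ j + m by omega)
  obtain ⟨b, hb⟩ := Int.eq_ofNat_of_zero_le (show 0 ≤ m - j by omega)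
  have hprod : ∏ k ∈ (Icc (-(m : ℤ)) m).erase j, |(j : ℝ) - k|
      = (a.factorial : ℝ) * b.factorial := by
    rw [← prod_abs_sub_erase_Icc j a b, show j - (a : ℤ) = -m by omega,
      show j + (b : ℤ) = m by omega]
  have hfac : ((m.factorial : ℝ)) ^ 2 ≤ (a.factorial : ℝ) * b.factorial := by
    exact_mod_cast factorial_sq_le_factorial_mul_factorial (show a + b = 2 * m by omega)
  calc _ = ∏ k ∈ (Icc (-(m : ℤ)) m).erase j, |(x - node k) / (node j - node k)| := abs_prod _ _
    _ ≤ ∏ k ∈ (Icc (-(m : ℤ)) m).erase j, Z / |(j : ℝ) - k| :=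
        prod_le_prod (fun _ _ => abs_nonneg _) hterm
    _ = Z ^ (2 * m) / ((a.factorial : ℝ) * b.factorial) := by
        rw [prod_div_distrib, prod_const, hcard, hprod]
    _ ≤ _ := by gcongr
end

section
/- Fix integers n ≥ 3 and even d ≥ 2, and reals λ ∈ (0,1], ε ∈ (0,1], and α ∈ (0, 1/(nd)]. Set β = ε·λ⁴·α^d / (3nd)^{d+2}. Then there exist a finite set Q ⊆ Δ(n) of at most 3d/2 + 1 points, each satisfying ‖q − x_U‖₂ ≤ α, and a map Φ from functions ŝ : Q → ℝⁿ to functions Δ(n) → ℝⁿ, with the following property: for every tuple (f_1, …, f_n) of univariate real polynomials of degree at most d with f_i(t) ∈ [λ, 1] for all t ∈ [0,1], and every ŝ : Q → ℝⁿ satisfying |ŝ(q)_i − f_i(q_i)/Σ_{j=1}^n f_j(q_j)| ≤ β for all q ∈ Q and all i, the output satisfies ‖Φ(ŝ)(x) − s(x)‖₂ ≤ ε for every x ∈ Δ(n), where s(x) ∈ ℝⁿ is the normalized score vector s(x)_i = f_i(x_i)/Σ_{j=1}^n f_j(x_j). -/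
open Finset

/-- A polynomial of degree at most `d` that is at most `η` in absolute value at `d + 1` nodes which
are `δ`-separated is at most `(d + 1) η / δ ^ d` at every point within distance `1` of all nodes. -/
theorem abs_eval_le_of_separated_nodes {d : ℕ} {p : Polynomial ℝ} (hp : p.natDegree ≤ d)
    {x : ℕ → ℝ} {δ η t : ℝ} (hδ : 0 < δ)
    (hsep : ∀ i ∈ range (d + 1), ∀ j ∈ range (d + 1), i ≠ j → δ ≤ |x i - x j|)
    (ht : ∀ j ∈ range (d + 1), |t - x j| ≤ 1)
    (hη : ∀ j ∈ range (d + 1), |p.eval (x j)| ≤ η) :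
    |p.eval t| ≤ (d + 1) * (η * (1 / δ) ^ d) := by
  have hinj : Set.InjOn x (range (d + 1) : Finset ℕ) := by
    intro i hi j hj hij
    by_contra hne
    have := hsep i hi j hj hne
    rw [hij, sub_self, abs_zero] at this
    linarith
  have hdeg : p.degree < #(range (d + 1)) := by
    rw [card_range]
    exact lt_of_le_of_lt Polynomial.degree_le_natDegree (by exact_mod_cast Nat.lt_succ_of_le hp)
  rw [Lagrange.eq_interpolate hinj hdeg, Lagrange.interpolate_apply, Polynomial.eval_finsetSum]
  refine (abs_sum_le_sum_abs _ _).trans ?_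
  have hterm : ∀ i ∈ range (d + 1), |(Polynomial.C (p.eval (x i)) *
      Lagrange.basis (range (d + 1)) x i).eval t| ≤ η * (1 / δ) ^ d := by
    intro i hi
    rw [Polynomial.eval_mul, Polynomial.eval_C, abs_mul]
    refine mul_le_mul (hη i hi) ?_ (abs_nonneg _) ((abs_nonneg _).trans (hη i hi))
    rw [Lagrange.basis, Polynomial.eval_prod, abs_prod]
    have hcard : #((range (d + 1)).erase i) = d := by simp [card_erase_of_mem hi]
    calc _ ≤ ∏ _j ∈ (range (d + 1)).erase i, 1 / δ := by
          refine prod_le_prod (fun _ _ => abs_nonneg _) fun j hj => ?_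
          obtain ⟨hji, hj⟩ := mem_erase.1 hj
          rw [Lagrange.basisDivisor, Polynomial.eval_mul, Polynomial.eval_C, Polynomial.eval_sub,
            Polynomial.eval_X, Polynomial.eval_C, abs_mul, abs_inv, one_div]
          have h1 := inv_anti₀ hδ (hsep i hi j hj hji.symm)
          calc _ ≤ δ⁻¹ * 1 := by
                gcongr
                exact ht j hj
            _ = _ := mul_one _
      _ = (1 / δ) ^ d := by rw [prod_const, hcard]
  refine (sum_le_sum hterm).trans ?_
  simp

/-- If two vectors with entries in `[lam, 1]` have normalizations within `γ` of each other, then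
their entrywise ratios are within `2 γ n / lam ^ 2` of each other. -/
theorem abs_ratio_sub_le {n : ℕ} {lam γ : ℝ} (hlam : 0 < lam) {u v : Fin n → ℝ}
    (hu : ∀ i, u i ∈ Set.Icc lam 1) (hv : ∀ i, v i ∈ Set.Icc lam 1)
    (h : ∀ i, |u i / ∑ j, u j - v i / ∑ j, v j| ≤ γ) (i c : Fin n) :
    |u i / u c - v i / v c| ≤ 2 * γ * n / lam ^ 2 := by
  have hn : (0 : ℝ) < n := by exact_mod_cast i.pos
  have hlam1 : lam ≤ 1 := (hu i).1.trans (hu i).2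
  have hγ : 0 ≤ γ := (abs_nonneg _).trans (h i)
  have hup : ∀ j, 0 < u j := fun j => hlam.trans_le (hu j).1
  have hvp : ∀ j, 0 < v j := fun j => hlam.trans_le (hv j).1
  have hne : (univ : Finset (Fin n)).Nonempty := ⟨i, mem_univ i⟩
  have hU : 0 < ∑ j, u j := sum_pos (fun j _ => hup j) hne
  have hV : 0 < ∑ j, v j := sum_pos (fun j _ => hvp j) hne
  have hVn : ∑ j, v j ≤ n := by
    simpa using sum_le_sum fun j (_ : j ∈ univ) => (hv j).2
  set U := ∑ j, u j
  set V := ∑ j, v j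
  have hkey : u i / u c - v i / v c =
      ((u i / U - v i / V) - u i / u c * (u c / U - v c / V)) * (V / v c) := by
    have := (hup c).ne'
    have := (hvp c).ne'
    field_simp
    ring
  have hVc : V / v c ≤ n / lam := div_le_div₀ hn.le hVn hlam (hv c).1
  have hr : u i / u c ≤ 1 / lam := div_le_div₀ zero_le_one (hu i).2 hlam (hu c).1
  have hr0 : 0 ≤ u i / u c := (div_pos (hup i) (hup c)).le
  have hbr : |(u i / U - v i / V) - u i / u c * (u c / U - v c / V)| ≤ 2 * γ / lam := by
    calc _ ≤ |u i / U - v i / V| + |u i / u c * (u c / U - v c / V)| := abs_sub _ _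
      _ ≤ γ + 1 / lam * γ := by
          rw [abs_mul, abs_of_nonneg hr0]
          gcongr
          · exact h i
          · exact h c
      _ ≤ 1 / lam * γ + 1 / lam * γ := by
          gcongr
          exact le_mul_of_one_le_left hγ (by rw [le_div_iff₀ hlam]; linarith)
      _ = _ := by ring
  rw [hkey, abs_mul, abs_of_pos (div_pos hV (hvp c))]
  have hVc0 : 0 ≤ V / v c := (div_pos hV (hvp c)).le
  calc _ ≤ 2 * γ / lam * (n / lam) := by gcongr
    _ = _ := by field_simp

/-- If two vectors with entries at least `lam` are entrywise within `E`, then their normalizations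
are within `2 E / lam` in `ℓ₂`. -/
theorem sqrt_sum_normalize_sub_sq_le {n : ℕ} (hn : 0 < n) {lam E : ℝ} (hlam : 0 < lam)
    {u v : Fin n → ℝ} (hu : ∀ i, lam ≤ u i) (hv : ∀ i, lam ≤ v i)
    (h : ∀ i, |u i - v i| ≤ E) :
    Real.sqrt (∑ i, (u i / ∑ j, u j - v i / ∑ j, v j) ^ 2) ≤ 2 * E / lam := by
  have hnR : (0 : ℝ) < n := by exact_mod_cast hn
  have hE : 0 ≤ E := (abs_nonneg _).trans (h ⟨0, hn⟩)
  have hUn : n * lam ≤ ∑ j, u j := by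
    simpa using sum_le_sum fun j (_ : j ∈ univ) => hu j
  have hVn : n * lam ≤ ∑ j, v j := by
    simpa using sum_le_sum fun j (_ : j ∈ univ) => hv j
  have hUV : |∑ j, v j - ∑ j, u j| ≤ n * E := by
    rw [← sum_sub_distrib]
    refine (abs_sum_le_sum_abs _ _).trans ?_
    simpa using sum_le_sum fun j (_ : j ∈ univ) => (abs_sub_comm (v j) (u j)).trans_le (h j)
  have hnl : 0 < n * lam := mul_pos hnR hlam
  have hU : 0 < ∑ j, u j := hnl.trans_le hUn
  have hV : 0 < ∑ j, v j := hnl.trans_le hVn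
  have hVeq : ∑ i, v i / ∑ j, v j = 1 := by rw [← sum_div, div_self hV.ne']
  set U := ∑ j, u j
  set V := ∑ j, v j
  have hterm : ∀ i, |u i / U - v i / V| ≤ E / (n * lam) + v i / V * (E / lam) := by
    intro i
    have hkey : u i / U - v i / V = (u i - v i) / U + v i / V * ((V - U) / U) := by
      field_simp
      ring
    have hvi : 0 ≤ v i / V := (div_pos (hlam.trans_le (hv i)) hV).le
    rw [hkey]
    refine (abs_add_le _ _).trans ?_
    rw [abs_mul, abs_of_nonneg hvi, abs_div, abs_div, abs_of_pos hU]
    refine add_le_add (div_le_div₀ hE (h i) hnl hUn) (mul_le_mul_of_nonneg_left ?_ hvi)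
    calc _ ≤ n * E / (n * lam) := div_le_div₀ (by positivity) hUV hnl hUn
      _ = _ := by field_simp
  have hsum : ∑ i, |u i / U - v i / V| ≤ 2 * E / lam := by
    refine (sum_le_sum fun i _ => hterm i).trans ?_
    rw [sum_add_distrib, ← sum_mul, hVeq, sum_const, card_univ, Fintype.card_fin, nsmul_eq_mul]
    apply le_of_eq
    field_simp
    ring
  refine le_trans (Real.sqrt_le_iff.2 ⟨sum_nonneg fun i _ => abs_nonneg _, ?_⟩) hsum
  simp_rw [← sq_abs (_ - _ : ℝ)]
  exact sum_sq_le_sq_sum_of_nonneg fun i _ => abs_nonneg _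

/-- Three zero-sum directions, each with a vanishing coordinate, such that every coordinate takes
two opposite values of size at least `1 / n`. -/
theorem exists_three_directions {n : ℕ} (hn : 3 ≤ n) :
    ∃ w : Fin 3 → Fin n → ℝ, (∀ j, ∑ i, w j i = 0) ∧ (∀ j, ∑ i, w j i ^ 2 ≤ 2) ∧
      (∀ j i, |w j i| ≤ 1) ∧ (∀ j, ∃ c, w j c = 0) ∧
      ∀ i, ∃ a : ℝ, 1 / (n : ℝ) ≤ a ∧ (∃ j, w j i = a) ∧ ∃ j, w j i = -a := by
  obtain ⟨k, rfl⟩ : ∃ k, n = k + 3 := ⟨n - 3, by omega⟩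
  have hk : (0 : ℝ) < (k : ℝ) + 1 := by positivity
  have hk1 : 1 / ((k : ℝ) + 1) ≤ 1 := by
    rw [div_le_one hk]
    linarith [(k.cast_nonneg : (0 : ℝ) ≤ k)]
  have hk0 : 0 ≤ 1 / ((k : ℝ) + 1) := by positivity
  have hkn : 1 / ((k + 3 : ℕ) : ℝ) ≤ 1 / ((k : ℝ) + 1) := by
    push_cast
    gcongr
    norm_num
  have hn1 : 1 / ((k + 3 : ℕ) : ℝ) ≤ 1 := hkn.trans hk1
  let D : ℝ → ℝ → ℝ → Fin (k + 3) → ℝ := fun a b c =>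
    Fin.cons (α := fun _ => ℝ) a (Fin.cons (α := fun _ => ℝ) b fun _ => c)
  have hmul : ((k : ℝ) + 1) * (1 / ((k : ℝ) + 1)) = 1 := by field_simp
  set r := 1 / ((k : ℝ) + 1)
  have hsum : ∀ a b c, ∑ i, D a b c i = a + (b + ((k : ℝ) + 1) * c) := by
    intro a b c
    simp [D, Fin.sum_univ_succ (n := k + 2), Fin.sum_univ_succ (n := k + 1)]
  have hsq : ∀ a b c, ∑ i, D a b c i ^ 2 = a ^ 2 + (b ^ 2 + ((k : ℝ) + 1) * c ^ 2) := by
    intro a b c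
    simp [D, Fin.sum_univ_succ (n := k + 2), Fin.sum_univ_succ (n := k + 1)]
  have hall : ∀ (P : ℝ → Prop) a b c, P a → P b → P c → ∀ i, P (D a b c i) := by
    intro P a b c ha hb hc i
    refine Fin.cases ha (fun i => ?_) i
    exact Fin.cases hb (fun _ => hc) i
  have hrsq : ((k : ℝ) + 1) * r ^ 2 ≤ 1 := by
    rw [sq, ← mul_assoc, hmul, one_mul]
    exact hk1
  refine ⟨![D 1 (-1) 0, D 0 1 (-r), D (-1) 0 r], ?_, ?_, ?_, ?_, ?_⟩
  · intro j
    fin_cases j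
    · exact (hsum 1 (-1) 0).trans (by ring)
    · exact (hsum 0 1 (-r)).trans (by linarith)
    · exact (hsum (-1) 0 r).trans (by linarith)
  · intro j
    fin_cases j
    · exact (hsq 1 (-1) 0).le.trans (by norm_num)
    · exact (hsq 0 1 (-r)).le.trans (by rw [neg_sq]; linarith)
    · exact (hsq (-1) 0 r).le.trans (by linarith)
  · have hr : |r| ≤ 1 := by rwa [abs_of_nonneg hk0]
    intro j
    fin_cases j
    · exact hall (fun y => |y| ≤ 1) 1 (-1) 0 (by norm_num) (by norm_num) (by norm_num)
    · exact hall (fun y => |y| ≤ 1) 0 1 (-r) (by norm_num) (by norm_num) (by rwa [abs_neg])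
    · exact hall (fun y => |y| ≤ 1) (-1) 0 r (by norm_num) (by norm_num) hr
  · intro j
    fin_cases j
    · exact ⟨Fin.succ (Fin.succ 0), rfl⟩
    · exact ⟨0, rfl⟩
    · exact ⟨Fin.succ 0, rfl⟩
  · intro i
    refine Fin.cases ⟨1, hn1, ⟨0, rfl⟩, 2, rfl⟩ (fun i => ?_) i
    exact Fin.cases ⟨1, hn1, ⟨1, rfl⟩, 0, rfl⟩ (fun i => ⟨r, hkn, ⟨2, rfl⟩, 1, rfl⟩) i

/-- The query points: the uniform vector, and its translates by `(k + 1) τ` for `k < m` along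
three directions. -/
noncomputable def queryPoints {n : ℕ} (m : ℕ) (τ : ℝ) (w : Fin 3 → Fin n → ℝ) :
    Finset (Fin n → ℝ) :=
  insert (fun _ => 1 / (n : ℝ))
    (univ.image fun p : Fin 3 × Fin m => fun i => 1 / (n : ℝ) + ((p.2 : ℕ) + 1) * τ * w p.1 i)

theorem card_queryPoints_le {n : ℕ} (m : ℕ) (τ : ℝ) (w : Fin 3 → Fin n → ℝ) :
    #(queryPoints m τ w) ≤ 3 * m + 1 := by
  refine (card_insert_le _ _).trans ?_
  gcongr
  exact card_image_le.trans (by simp)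

theorem exists_translate_of_mem_queryPoints {n m : ℕ} {τ : ℝ} (hτ : 0 ≤ τ)
    {w : Fin 3 → Fin n → ℝ} {q : Fin n → ℝ} (hq : q ∈ queryPoints m τ w) :
    ∃ (s : ℝ) (j : Fin 3), 0 ≤ s ∧ s ≤ m * τ ∧ q = fun i => 1 / (n : ℝ) + s * w j i := by
  rcases mem_insert.1 hq with rfl | hq
  · exact ⟨0, 0, le_rfl, by positivity, by simp⟩
  · obtain ⟨⟨j, l⟩, -, rfl⟩ := mem_image.1 hq
    refine ⟨((l : ℕ) + 1) * τ, j, by positivity, ?_, rfl⟩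
    gcongr
    exact_mod_cast l.isLt

/-- Every coordinate sees, among the query points with some coordinate left at `1 / n`, a full
arithmetic progression of `2 m + 1` values centred at `1 / n`. -/
theorem exists_mem_queryPoints_eq {n m : ℕ} {τ a : ℝ} {w : Fin 3 → Fin n → ℝ} {i : Fin n}
    (hzero : ∀ j, ∃ c, w j c = 0) (hpos : ∃ j, w j i = a) (hneg : ∃ j, w j i = -a)
    {k : ℕ} (hk : k ≤ 2 * m) :
    ∃ q ∈ queryPoints m τ w, q i = 1 / n + ((k : ℝ) - m) * (τ * a) ∧ ∃ c, q c = 1 / n := by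
  have hmem : ∀ (j : Fin 3) (l : ℕ), l < m →
      (fun i => 1 / (n : ℝ) + ((l : ℝ) + 1) * τ * w j i) ∈ queryPoints m τ w := fun j l hl =>
    mem_insert_of_mem (mem_image.2 ⟨(j, ⟨l, hl⟩), mem_univ _, rfl⟩)
  rcases lt_trichotomy k m with h | rfl | h
  · obtain ⟨j, hj⟩ := hneg
    obtain ⟨c, hc⟩ := hzero j
    obtain ⟨l, rfl⟩ : ∃ l, m = k + l + 1 := ⟨m - k - 1, by omega⟩
    refine ⟨_, hmem j l (by omega), ?_, c, by simp [hc]⟩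
    simp only [hj]
    push_cast
    ring
  · exact ⟨_, mem_insert_self _ _, by simp, i, rfl⟩
  · obtain ⟨j, hj⟩ := hpos
    obtain ⟨c, hc⟩ := hzero j
    obtain ⟨l, rfl⟩ : ∃ l, k = m + l + 1 := ⟨k - m - 1, by omega⟩
    refine ⟨_, hmem j l (by omega), ?_, c, by simp [hc]⟩
    simp only [hj]
    push_cast
    ring

/-- Rescaling so that a fixed reference entry of the uniform-point scores equals `1`, two models
with close normalized scores at the uniform vector and at `q` have close values at `q`, provided
`q` leaves some coordinate at `1 / n`. -/
theorem abs_rescaled_eval_sub_le {n : ℕ} {lam γ : ℝ} (hlam : 0 < lam)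
    {f g : Fin n → Polynomial ℝ} {q : Fin n → ℝ} (hq : ∀ i, q i ∈ Set.Icc (0 : ℝ) 1)
    (hf : ∀ i, ∀ t ∈ Set.Icc (0 : ℝ) 1, (f i).eval t ∈ Set.Icc lam 1)
    (hg : ∀ i, ∀ t ∈ Set.Icc (0 : ℝ) 1, (g i).eval t ∈ Set.Icc lam 1)
    (hqs : ∀ i, |(f i).eval (q i) / ∑ j, (f j).eval (q j)
      - (g i).eval (q i) / ∑ j, (g j).eval (q j)| ≤ γ)
    (hus : ∀ i, |(f i).eval (1 / (n : ℝ)) / ∑ j, (f j).eval (1 / (n : ℝ))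
      - (g i).eval (1 / (n : ℝ)) / ∑ j, (g j).eval (1 / (n : ℝ))| ≤ γ)
    {c : Fin n} (hc : q c = 1 / n) (i o : Fin n) :
    |(f i).eval (q i) / (f o).eval (1 / (n : ℝ)) - (g i).eval (q i) / (g o).eval (1 / (n : ℝ))|
      ≤ 4 * γ * n / lam ^ 3 := by
  have hu : (1 / (n : ℝ)) ∈ Set.Icc (0 : ℝ) 1 := hc ▸ hq c
  have h1 := abs_ratio_sub_le hlam (fun i => hf i _ (hq i)) (fun i => hg i _ (hq i)) hqs i c
  have h2 := abs_ratio_sub_le hlam (fun i => hf i _ hu) (fun i => hg i _ hu) hus c o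
  rw [hc] at h1
  obtain ⟨hfc, -⟩ := hf c _ hu
  obtain ⟨hfo, -⟩ := hf o _ hu
  obtain ⟨hgo, -⟩ := hg o _ hu
  obtain ⟨hgc, -⟩ := hg c _ hu
  have hfco : |(f c).eval (1 / (n : ℝ)) / (f o).eval (1 / (n : ℝ))| ≤ 1 / lam := by
    rw [abs_of_pos (div_pos (hlam.trans_le hfc) (hlam.trans_le hfo))]
    exact div_le_div₀ zero_le_one (hf c _ hu).2 hlam hfo
  have hgic : |(g i).eval (q i) / (g c).eval (1 / (n : ℝ))| ≤ 1 / lam := by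
    rw [abs_of_pos (div_pos (hlam.trans_le (hg i _ (hq i)).1) (hlam.trans_le hgc))]
    exact div_le_div₀ zero_le_one (hg i _ (hq i)).2 hlam hgc
  have hfc0 := (hlam.trans_le hfc).ne'
  have hgc0 := (hlam.trans_le hgc).ne'
  rw [← div_mul_div_cancel₀ hfc0 (a := (f i).eval (q i)),
    ← div_mul_div_cancel₀ hgc0 (a := (g i).eval (q i))]
  generalize (f i).eval (q i) / (f c).eval (1 / (n : ℝ)) = a at *
  generalize (g i).eval (q i) / (g c).eval (1 / (n : ℝ)) = a' at *
  generalize (f c).eval (1 / (n : ℝ)) / (f o).eval (1 / (n : ℝ)) = b at *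
  generalize (g c).eval (1 / (n : ℝ)) / (g o).eval (1 / (n : ℝ)) = b' at *
  calc |a * b - a' * b'| = |(a - a') * b + a' * (b - b')| := by ring_nf
    _ ≤ |a - a'| * |b| + |a'| * |b - b'| := by
        rw [← abs_mul, ← abs_mul]
        exact abs_add_le _ _
    _ ≤ 2 * γ * n / lam ^ 2 * (1 / lam) + 1 / lam * (2 * γ * n / lam ^ 2) :=
        add_le_add (mul_le_mul h1 hfco (abs_nonneg _) ((abs_nonneg _).trans h1))
          (mul_le_mul hgic h2 (abs_nonneg _) (by positivity))
    _ = _ := by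
        field_simp
        ring

/-- Two models whose normalized scores agree up to `γ` on the query points have nearby normalized
scores on the whole simplex. -/
theorem sqrt_sum_score_sub_sq_le {n m : ℕ} (hn : 0 < n) {lam γ τ : ℝ} (hlam : 0 < lam) (hτ : 0 < τ)
    {w : Fin 3 → Fin n → ℝ} (hzero : ∀ j, ∃ c, w j c = 0)
    (hw : ∀ i, ∃ a : ℝ, 1 / (n : ℝ) ≤ a ∧ (∃ j, w j i = a) ∧ ∃ j, w j i = -a)
    (hQ : ∀ q ∈ queryPoints m τ w, ∀ i, q i ∈ Set.Icc (0 : ℝ) 1)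
    {f g : Fin n → Polynomial ℝ}
    (hfd : ∀ i, (f i).natDegree ≤ 2 * m) (hgd : ∀ i, (g i).natDegree ≤ 2 * m)
    (hf : ∀ i, ∀ t ∈ Set.Icc (0 : ℝ) 1, (f i).eval t ∈ Set.Icc lam 1)
    (hg : ∀ i, ∀ t ∈ Set.Icc (0 : ℝ) 1, (g i).eval t ∈ Set.Icc lam 1)
    (hfg : ∀ q ∈ queryPoints m τ w, ∀ i, |(f i).eval (q i) / ∑ j, (f j).eval (q j)
      - (g i).eval (q i) / ∑ j, (g j).eval (q j)| ≤ γ)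
    {x : Fin n → ℝ} (hx : ∀ i, x i ∈ Set.Icc (0 : ℝ) 1) :
    Real.sqrt (∑ i, ((f i).eval (x i) / ∑ j, (f j).eval (x j)
      - (g i).eval (x i) / ∑ j, (g j).eval (x j)) ^ 2) ≤
      2 * (((2 * m : ℕ) + 1) * (4 * γ * n / lam ^ 3 * (n / τ) ^ (2 * m))) / lam := by
  have hnR : (0 : ℝ) < n := by exact_mod_cast hn
  have humem : (fun _ => 1 / (n : ℝ)) ∈ queryPoints m τ w := mem_insert_self _ _
  let o : Fin n := ⟨0, hn⟩
  have hu : (1 / (n : ℝ)) ∈ Set.Icc (0 : ℝ) 1 := hQ _ humem o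
  have hfo := hf o _ hu
  have hgo := hg o _ hu
  have hfo0 : 0 < (f o).eval (1 / (n : ℝ)) := hlam.trans_le hfo.1
  have hgo0 : 0 < (g o).eval (1 / (n : ℝ)) := hlam.trans_le hgo.1
  have hclose : ∀ i, |(f i).eval (x i) / (f o).eval (1 / (n : ℝ))
      - (g i).eval (x i) / (g o).eval (1 / (n : ℝ))| ≤
      ((2 * m : ℕ) + 1) * (4 * γ * n / lam ^ 3 * (n / τ) ^ (2 * m)) := by
    intro i
    obtain ⟨a, ha, hpos, hneg⟩ := hw i
    have hτn : τ / n ≤ τ * a := by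
      rw [div_eq_mul_one_div]
      gcongr
    let D : Polynomial ℝ := Polynomial.C ((f o).eval (1 / (n : ℝ)))⁻¹ * f i
      - Polynomial.C ((g o).eval (1 / (n : ℝ)))⁻¹ * g i
    have hD : ∀ t, D.eval t = (f i).eval t / (f o).eval (1 / (n : ℝ))
        - (g i).eval t / (g o).eval (1 / (n : ℝ)) := by
      intro t
      simp only [D, Polynomial.eval_sub, Polynomial.eval_mul, Polynomial.eval_C]
      ring
    have hDdeg : D.natDegree ≤ 2 * m :=
      (Polynomial.natDegree_sub_le _ _).trans (max_le
        ((Polynomial.natDegree_C_mul_le _ _).trans (hfd i))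
        ((Polynomial.natDegree_C_mul_le _ _).trans (hgd i)))
    rw [← hD, ← one_div_div τ (n : ℝ)]
    have hnode : ∀ k ∈ range (2 * m + 1), ∃ q ∈ queryPoints m τ w,
        q i = 1 / n + ((k : ℝ) - m) * (τ * a) ∧ ∃ c, q c = 1 / n := fun k hk =>
      exists_mem_queryPoints_eq hzero hpos hneg (Nat.lt_succ_iff.1 (mem_range.1 hk))
    refine abs_eval_le_of_separated_nodes (x := fun k => 1 / (n : ℝ) + ((k : ℝ) - m) * (τ * a))
      hDdeg (div_pos hτ hnR) ?_ ?_ ?_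
    · intro k _ l _ hkl
      have h1 : (1 : ℝ) ≤ |(k : ℝ) - l| := by
        have : (1 : ℤ) ≤ |(k : ℤ) - l| := Int.one_le_abs (sub_ne_zero.2 (by exact_mod_cast hkl))
        exact_mod_cast this
      have h2 : 0 < τ * a := (div_pos hτ hnR).trans_le hτn
      have h3 : 1 / (n : ℝ) + ((k : ℝ) - m) * (τ * a) - (1 / (n : ℝ) + ((l : ℝ) - m) * (τ * a))
          = ((k : ℝ) - l) * (τ * a) := by ring
      rw [h3, abs_mul, abs_of_pos h2]
      exact hτn.trans (le_mul_of_one_le_left h2.le h1)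
    · intro k hk
      obtain ⟨q, hq, hqi, -⟩ := hnode k hk
      have h1 := hQ q hq i
      have h2 := hx i
      rw [← hqi, abs_le]
      constructor <;> linarith [h1.1, h1.2, h2.1, h2.2]
    · intro k hk
      obtain ⟨q, hq, hqi, c, hc⟩ := hnode k hk
      rw [hD, ← hqi]
      exact abs_rescaled_eval_sub_le hlam (hQ q hq) hf hg (hfg q hq) (hfg _ humem) hc i o
  have hscale : ∀ (h : Fin n → Polynomial ℝ) (s : ℝ), 0 < s → ∀ i,
      (h i).eval (x i) / ∑ j, (h j).eval (x j) =
        (h i).eval (x i) / s / ∑ j, (h j).eval (x j) / s := by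
    intro h s hs i
    rw [← sum_div, div_div_div_cancel_right₀ hs.ne']
  have hle : ∀ {y s : ℝ}, lam ≤ y → 0 < s → s ≤ 1 → lam ≤ y / s := by
    intro y s hy hs hs1
    exact hy.trans (le_div_self (hlam.le.trans hy) hs hs1)
  simp_rw [hscale f _ hfo0, hscale g _ hgo0]
  exact sqrt_sum_normalize_sub_sq_le hn hlam (fun i => hle (hf i _ (hx i)).1 hfo0 hfo.2)
    (fun i => hle (hg i _ (hx i)).1 hgo0 hgo.2) hclose

/-- Local learnability of bounded-degree univariate polynomial preference models:
with `β = ε·λ⁴·α^d / (3nd)^{d+2}`, there is a set `Q` of at most `3d/2 + 1` query points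
in the `α`-ball (in `ℓ₂`) around the uniform vector, and a learning map `Φ` taking
answer functions `ŝ : Q → ℝⁿ` to hypothesis score functions on the simplex, such that
whenever the answers are `β`-accurate (in `ℓ∞`) for the normalized scores of a model
given by degree-`≤ d` polynomials `f_i` with values in `[λ, 1]` on `[0,1]`, the hypothesis
is `ε`-accurate (in `ℓ₂`) for the normalized scores everywhere on the simplex. -/
theorem bup_locally_learnable (n d : ℕ) (hn : 3 ≤ n) (hd : 2 ≤ d) (hdeven : Even d)
    (lam ε α β : ℝ)
    (hlam : lam ∈ Set.Ioc (0 : ℝ) 1) (hε : ε ∈ Set.Ioc (0 : ℝ) 1)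
    (hα : α ∈ Set.Ioc (0 : ℝ) (1 / ((n : ℝ) * d)))
    (hβ : β = ε * lam ^ 4 * α ^ d / ((3 : ℝ) * n * d) ^ (d + 2)) :
    ∃ (Q : Finset (Fin n → ℝ))
      (Φ : ({q : Fin n → ℝ // q ∈ Q} → Fin n → ℝ) → (Fin n → ℝ) → Fin n → ℝ),
      (↑Q ⊆ stdSimplex ℝ (Fin n)) ∧
      Q.card ≤ 3 * d / 2 + 1 ∧
      (∀ q ∈ Q, Real.sqrt (∑ i, (q i - 1 / n) ^ 2) ≤ α) ∧
      ∀ f : Fin n → Polynomial ℝ,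
        (∀ i, (f i).natDegree ≤ d) →
        (∀ i, ∀ t ∈ Set.Icc (0 : ℝ) 1, (f i).eval t ∈ Set.Icc lam 1) →
        ∀ sHat : {q : Fin n → ℝ // q ∈ Q} → Fin n → ℝ,
          (∀ (q : {q : Fin n → ℝ // q ∈ Q}) (i : Fin n),
            |sHat q i - (f i).eval ((q : Fin n → ℝ) i)
              / ∑ j, (f j).eval ((q : Fin n → ℝ) j)| ≤ β) →
          ∀ x ∈ stdSimplex ℝ (Fin n),
            Real.sqrt (∑ i, (Φ sHat x i
              - (f i).eval (x i) / ∑ j, (f j).eval (x j)) ^ 2) ≤ ε := by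
  classical
  obtain ⟨m, rfl⟩ := hdeven.two_dvd
  obtain ⟨hlam0, -⟩ := hlam
  obtain ⟨hε0, -⟩ := hε
  obtain ⟨hα0, hα1⟩ := hα
  obtain ⟨w, hwsum, hwsq, hwabs, hzero, hw⟩ := exists_three_directions hn
  have hn0 : 0 < n := by omega
  have hnR : (3 : ℝ) ≤ n := by exact_mod_cast hn
  have hdR : (2 : ℝ) ≤ (2 * m : ℕ) := by exact_mod_cast hd
  set τ : ℝ := α / (2 * m : ℕ) with hτdef
  have hτ : 0 < τ := by positivity
  have hmτ : (m : ℝ) * τ = α / 2 := by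
    have : (m : ℝ) ≠ 0 := by
      have : m ≠ 0 := by omega
      exact_mod_cast this
    rw [hτdef]
    push_cast
    field_simp
  have hαn : α / 2 ≤ 1 / n := by
    have : 1 / ((n : ℝ) * (2 * m : ℕ)) ≤ 1 / n := by
      gcongr
      nlinarith
    linarith
  have hsimplex : ∀ q ∈ queryPoints m τ w, q ∈ stdSimplex ℝ (Fin n) := by
    intro q hq
    obtain ⟨s, j, hs0, hs, rfl⟩ := exists_translate_of_mem_queryPoints hτ.le hq
    refine ⟨fun i => ?_, ?_⟩
    · have h1 := (abs_le.1 (hwabs j i)).1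
      have h2 : s * (-1) ≤ s * w j i := by gcongr
      change 0 ≤ 1 / (n : ℝ) + s * w j i
      linarith
    · rw [sum_add_distrib, ← mul_sum, hwsum]
      simp [hn0.ne']
  have hIcc : ∀ q ∈ stdSimplex ℝ (Fin n), ∀ i, q i ∈ Set.Icc (0 : ℝ) 1 := fun q hq i =>
    mem_Icc_of_mem_stdSimplex hq i
  let consistent (sHat : {q : Fin n → ℝ // q ∈ queryPoints m τ w} → Fin n → ℝ)
      (g : Fin n → Polynomial ℝ) : Prop :=
    (∀ i, (g i).natDegree ≤ 2 * m) ∧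
    (∀ i, ∀ t ∈ Set.Icc (0 : ℝ) 1, (g i).eval t ∈ Set.Icc lam 1) ∧
    ∀ (q : {q : Fin n → ℝ // q ∈ queryPoints m τ w}) (i : Fin n),
      |sHat q i - (g i).eval ((q : Fin n → ℝ) i) / ∑ j, (g j).eval ((q : Fin n → ℝ) j)| ≤ β
  -- The learner outputs the scores of an arbitrary model consistent with the answers.
  refine ⟨queryPoints m τ w, fun sHat x i => (Classical.epsilon (consistent sHat) i).eval (x i) /
    ∑ j, (Classical.epsilon (consistent sHat) j).eval (x j), hsimplex, ?_, ?_, ?_⟩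
  · exact (card_queryPoints_le m τ w).trans (by omega)
  · intro q hq
    obtain ⟨s, j, hs0, hs, rfl⟩ := exists_translate_of_mem_queryPoints hτ.le hq
    refine Real.sqrt_le_iff.2 ⟨hα0.le, ?_⟩
    have hsum : ∑ i, (1 / (n : ℝ) + s * w j i - 1 / n) ^ 2 = s ^ 2 * ∑ i, w j i ^ 2 := by
      rw [mul_sum]
      exact sum_congr rfl fun i _ => by ring
    rw [hsum]
    calc s ^ 2 * ∑ i, w j i ^ 2 ≤ (α / 2) ^ 2 * 2 := by
          gcongr
          · linarith
          · exact hwsq j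
      _ ≤ α ^ 2 := by nlinarith
  · intro f hfd hf sHat hs x hx
    obtain ⟨hgd, hg, hgs⟩ : consistent sHat (Classical.epsilon (consistent sHat)) :=
      Classical.epsilon_spec ⟨f, hfd, hf, hs⟩
    set g := Classical.epsilon (consistent sHat)
    have hclose : ∀ q ∈ queryPoints m τ w, ∀ i, |(g i).eval (q i) / ∑ j, (g j).eval (q j)
        - (f i).eval (q i) / ∑ j, (f j).eval (q j)| ≤ 2 * β := by
      intro q hq i
      have h1 := hgs ⟨q, hq⟩ i
      have h2 := hs ⟨q, hq⟩ i
      rw [abs_le] at h1 h2 ⊢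
      constructor <;> linarith [h1.1, h1.2, h2.1, h2.2]
    refine (sqrt_sum_score_sub_sq_le hn0 hlam0 hτ hzero hw (fun q hq => hIcc q (hsimplex q hq))
      hgd hfd hg hf hclose (hIcc x hx)).trans ?_
    rw [hβ, hτdef]
    generalize 2 * m = d at *
    have hd0 : (0 : ℝ) < d := by linarith
    have hn0' : (0 : ℝ) < n := by linarith
    have hfactor : 2 * (((d : ℝ) + 1) * (4 * (2 * (ε * lam ^ 4 * α ^ d /
        ((3 : ℝ) * n * d) ^ (d + 2))) * n / lam ^ 3 * (n / (α / d)) ^ d)) / lam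
        = ε * (16 * (d + 1) / (3 ^ d * (9 * n * d ^ 2))) := by
      rw [pow_add, mul_pow, mul_pow, div_div_eq_mul_div, div_pow, mul_pow]
      field_simp
      ring
    rw [hfactor]
    refine mul_le_of_le_one_right hε0.le ?_
    rw [div_le_one (by positivity)]
    have h3 : (1 : ℝ) ≤ 3 ^ d := one_le_pow₀ (by norm_num)
    calc 16 * ((d : ℝ) + 1) ≤ 1 * (9 * 3 * d ^ 2) := by nlinarith
      _ ≤ 3 ^ d * (9 * n * d ^ 2) := by gcongr
end
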